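/- arXiv:1810.00015 — 3 statements merged into one kernel-verified Lean document; each statement's English description precedes it below -/
import Mathlib

section
/- Let C ⊆ F_q^n be a linear code. There is an injective group homomorphism from AutL_p(C) into the monomial automorphism group AutM(φ(C)) of the concatenated code φ(C) ⊆ F_p^{n₀n} such that, for every element of AutL_p(C) with coordinate permutation π, the coordinate permutation of its image maps each block N_j = {(j−1)n₀+1, …, jn₀} of coordinates onto the block N_{π(j)}; in particular, AutL_p(C) is isomorphic to a subgroup of AutM(φ(C)) acting imprimitively on the coordinates with blocks N_1,…,N_n. -/
open Finset

/-- Monomial automorphisms of a code. -/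
def autMSet {F : Type*} [MonoidWithZero F] {ι : Type*} (C : Set (ι → F)) :
    Set (Equiv.Perm (ι → F)) :=
  {e | (∃ (π : Equiv.Perm ι) (c : ι → F), (∀ i, c i ≠ 0) ∧
        ∀ v i, e v i = c i * v (π⁻¹ i)) ∧ ⇑e '' C = C}

/-- `Fp`-linear automorphisms of a code over a field `Fq` which is an `Fp`-algebra. -/
def autLSet (Fp : Type*) {Fq : Type*} [Field Fp] [Field Fq] [Algebra Fp Fq] {ι : Type*}
    (C : Set (ι → Fq)) : Set (Equiv.Perm (ι → Fq)) :=
  {e | (∃ (π : Equiv.Perm ι) (σ : ι → Equiv.Perm Fq),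
        (∀ i x y, σ i (x + y) = σ i x + σ i y) ∧
        (∀ i (b : Fp) (x : Fq), σ i (algebraMap Fp Fq b * x) = algebraMap Fp Fq b * σ i x) ∧
        ∀ v i, e v i = σ i (v (π⁻¹ i))) ∧ ⇑e '' C = C}

/-!
Up to nonzero scalars, `ξ, ξ², …, ξ^n₀` are the points of the projective space of `F_q` over `F_p`:
there are `n₀` points, and `gcd(n₀, p - 1) = gcd(k, p - 1) = 1` keeps the nontrivial elements of
`F_pˣ` out of the group generated by `ξ`.  By nondegeneracy of the trace form, the coordinates of
`φ` on a block are therefore the points of the projective space of the dual of `F_q`, i.e. the inner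
code is a simplex code.  A linear automorphism of `F_q` acts on the dual and permutes these points,
so it turns into a monomial map of the block.  A monomial map fixing every word `φ(v)` is the
identity because distinct coordinates of `φ` are non-proportional functionals.  Hence the lift of an
automorphism through `φ` is unique, and uniqueness makes lifting multiplicative.
-/

open scoped LinearAlgebra.Projectivization

section WreathProduct

variable {G V ι : Type*} [Group G] [MulAction G V]

/-- The permutation of the words over `V` which moves the entry at each coordinate `i` to `π i` and
then lets `c i : G` act on the new `i`-th entry. -/
def wreathPerm (π : Equiv.Perm ι) (c : ι → G) : Equiv.Perm (ι → V) :=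
  (π.arrowCongr (Equiv.refl V)).trans (Equiv.piCongrRight fun i => MulAction.toPerm (c i))

theorem wreathPerm_apply (π : Equiv.Perm ι) (c : ι → G) (v : ι → V) (i : ι) :
    wreathPerm π c v i = c i • v (π⁻¹ i) :=
  rfl

theorem wreathPerm_mul (π ρ : Equiv.Perm ι) (c d : ι → G) :
    (wreathPerm π c * wreathPerm ρ d : Equiv.Perm (ι → V)) =
      wreathPerm (π * ρ) fun i => c i * d (π⁻¹ i) := by
  ext v i
  simp [wreathPerm_apply, mul_smul]

variable (G V ι) in
/-- The permutational wreath product of `G` and the symmetric group of `ι`, as a group of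
permutations of the words over `V`.  It is the monomial group when `G` is the group of units
of a field `V`. -/
def wreathGroup : Subgroup (Equiv.Perm (ι → V)) where
  carrier := {g | ∃ (π : Equiv.Perm ι) (c : ι → G), wreathPerm π c = g}
  one_mem' := ⟨1, 1, by ext v i; simp [wreathPerm_apply]⟩
  mul_mem' := by
    rintro _ _ ⟨π, c, rfl⟩ ⟨ρ, d, rfl⟩
    exact ⟨π * ρ, fun i => c i * d (π⁻¹ i), (wreathPerm_mul π ρ c d).symm⟩
  inv_mem' := by
    rintro _ ⟨π, c, rfl⟩
    refine ⟨π⁻¹, fun i => (c (π i))⁻¹, eq_inv_of_mul_eq_one_left ?_⟩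
    ext v i
    simp [wreathPerm_apply]

end WreathProduct

section LineTransversal

variable {K W W' Λ : Type*} [Field K] [AddCommGroup W] [Module K W] [AddCommGroup W'] [Module K W']

variable (K) in
/-- A family of nonzero vectors representing each point of the projective space of `W`
exactly once. -/
structure IsLineTransversal (b : Λ → W) : Prop where
  ne_zero : ∀ l, b l ≠ 0
  bijective_mk : Function.Bijective fun l => Projectivization.mk K (b l) (ne_zero l)

namespace IsLineTransversal

variable {b : Λ → W}

theorem exists_smul_eq (hb : IsLineTransversal K b) {w : W} (hw : w ≠ 0) :
    ∃ (a : Kˣ) (l : Λ), a • b l = w := by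
  obtain ⟨l, hl⟩ := hb.bijective_mk.surjective (Projectivization.mk K w hw)
  obtain ⟨a, ha⟩ := (Projectivization.mk_eq_mk_iff K w (b l) hw (hb.ne_zero l)).1 hl.symm
  exact ⟨a, l, ha⟩

theorem eq_one_and_eq_of_smul_eq (hb : IsLineTransversal K b) {a : Kˣ} {l l' : Λ}
    (h : a • b l = b l') : a = 1 ∧ l = l' := by
  obtain rfl : l' = l := hb.bijective_mk.injective <|
    (Projectivization.mk_eq_mk_iff K _ _ (hb.ne_zero l') (hb.ne_zero l)).2 ⟨a, h⟩
  refine ⟨Units.ext (smul_left_injective K (hb.ne_zero l') ?_), rfl⟩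
  simpa [Units.smul_def] using h

theorem map (hb : IsLineTransversal K b) (e : W ≃ₗ[K] W') : IsLineTransversal K (e ∘ b) := by
  refine ⟨fun l => e.map_ne_zero_iff.2 (hb.ne_zero l), ?_, fun P => ?_⟩
  · exact (Projectivization.map_injective e.toLinearMap e.injective).comp hb.bijective_mk.injective
  · induction P using Projectivization.ind with
    | h w hw =>
      obtain ⟨a, l, h⟩ := hb.exists_smul_eq (e.symm.map_ne_zero_iff.2 hw)
      refine ⟨l, .symm <| (Projectivization.mk_eq_mk_iff K _ _ _ _).2 ⟨a, ?_⟩⟩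
      rw [Function.comp_apply, Units.smul_def, ← map_smul, ← Units.smul_def, h, e.apply_symm_apply]

theorem exists_perm_map_eq_smul (hb : IsLineTransversal K b) (e : W ≃ₗ[K] W) :
    ∃ (ρ : Equiv.Perm Λ) (a : Λ → Kˣ), ∀ l, e (b l) = a l • b (ρ l) := by
  let points : Λ ≃ ℙ K W := Equiv.ofBijective _ hb.bijective_mk
  let ρ : Equiv.Perm Λ := points.symm.permCongr (MulAction.toPerm e)
  have hρ (l : Λ) : ∃ a : Kˣ, a • b (ρ l) = e (b l) := by
    refine (Projectivization.mk_eq_mk_iff K _ _ ((hb.map e).ne_zero l) (hb.ne_zero (ρ l))).1 ?_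
    exact (points.apply_symm_apply (e • points l)).symm
  choose a ha using hρ
  exact ⟨ρ, a, fun l => (ha l).symm⟩

end IsLineTransversal

end LineTransversal

section Concatenation

variable {K V Λ ι : Type*} [Field K] [AddCommGroup V] [Module K V] {b : Λ → Module.Dual K V}

/-- The concatenation map whose inner encoder evaluates the functionals `b l`; its coordinates are
the pairs of an outer coordinate and an index `l`. -/
def concatMap (b : Λ → Module.Dual K V) (v : ι → V) (jl : ι × Λ) : K :=
  b jl.2 (v jl.1)

namespace IsLineTransversal

theorem concatMap_injective (hb : IsLineTransversal K b) :
    Function.Injective (concatMap b : (ι → V) → ι × Λ → K) := by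
  intro v w hvw
  ext j
  refine sub_eq_zero.1 <| (Module.forall_dual_apply_eq_zero_iff K _).1 fun f => ?_
  rcases eq_or_ne f 0 with rfl | hf
  · exact LinearMap.zero_apply _
  obtain ⟨a, l, rfl⟩ := hb.exists_smul_eq hf
  have hl : b l (v j) = b l (w j) := congrFun hvw (j, l)
  rw [LinearMap.smul_apply, map_sub, hl, sub_self, smul_zero]

theorem eq_one_and_eq_of_smul_concatMap_eq (hb : IsLineTransversal K b) {a : Kˣ} {x y : ι × Λ}
    (h : ∀ v : ι → V, a • concatMap b v x = concatMap b v y) : a = 1 ∧ x = y := by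
  classical
  obtain ⟨j, l⟩ := x
  obtain ⟨j', l'⟩ := y
  obtain rfl : j = j' := by
    by_contra hne
    refine hb.ne_zero l' (LinearMap.ext fun x => ?_)
    simpa [concatMap, hne] using (h (Pi.single j' x)).symm
  have hl : a • b l = b l' := LinearMap.ext fun x => h fun _ => x
  obtain ⟨rfl, rfl⟩ := hb.eq_one_and_eq_of_smul_eq hl
  exact ⟨rfl, rfl⟩

theorem eq_one_of_forall_concatMap_eq (hb : IsLineTransversal K b)
    {g : Equiv.Perm (ι × Λ → K)} (hg : g ∈ wreathGroup Kˣ K (ι × Λ))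
    (hfix : ∀ v, g (concatMap b v) = concatMap b v) : g = 1 := by
  obtain ⟨π, c, rfl⟩ := hg
  have hcoord (x : ι × Λ) : c x = 1 ∧ π⁻¹ x = x :=
    hb.eq_one_and_eq_of_smul_concatMap_eq fun v => congrFun (hfix v) x
  ext w x
  rw [wreathPerm_apply, (hcoord x).1, (hcoord x).2, one_smul, Equiv.Perm.one_apply]

theorem eq_of_forall_concatMap_eq (hb : IsLineTransversal K b)
    {g h : Equiv.Perm (ι × Λ → K)} (hg : g ∈ wreathGroup Kˣ K (ι × Λ))
    (hh : h ∈ wreathGroup Kˣ K (ι × Λ)) (hgh : ∀ v, g (concatMap b v) = h (concatMap b v)) :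
    g = h := by
  suffices h⁻¹ * g = 1 from (inv_mul_eq_one.1 this).symm
  refine hb.eq_one_of_forall_concatMap_eq (mul_mem (inv_mem hh) hg) fun v => ?_
  rw [Equiv.Perm.mul_apply, hgh, Equiv.Perm.inv_def, Equiv.symm_apply_apply]

theorem exists_wreathPerm_concatMap (hb : IsLineTransversal K b)
    (π : Equiv.Perm ι) (σ : ι → V ≃ₗ[K] V) :
    ∃ (π' : Equiv.Perm (ι × Λ)) (c : ι × Λ → Kˣ), (∀ jl, (π' jl).1 = π jl.1) ∧
      ∀ v, wreathPerm π' c (concatMap b v) = concatMap b (wreathPerm π σ v) := by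
  choose ρ a h using fun j => hb.exists_perm_map_eq_smul (σ j).dualMap
  refine ⟨(Equiv.prodShear π⁻¹ ρ)⁻¹, fun jl => a jl.1 jl.2, fun jl => rfl, fun v => ?_⟩
  ext ⟨j, l⟩
  exact (LinearMap.congr_fun (h j l) (v (π⁻¹ j))).symm

end IsLineTransversal

end Concatenation

section Automorphisms

variable {K L ι : Type*} [Field K] [Field L] [Algebra K L]

theorem mem_autMSet_iff {C : Set (ι → K)} {e : Equiv.Perm (ι → K)} :
    e ∈ autMSet C ↔ e ∈ wreathGroup Kˣ K ι ∧ e '' C = C := by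
  refine and_congr_left fun _ => ⟨?_, ?_⟩
  · rintro ⟨π, c, hc, he⟩
    lift c to ι → Kˣ using fun i => (hc i).isUnit
    exact ⟨π, c, Equiv.ext fun v => funext fun i => (he v i).symm⟩
  · rintro ⟨π, c, rfl⟩
    exact ⟨π, fun i => c i, fun i => (c i).ne_zero, fun _ _ => rfl⟩

theorem exists_wreathPerm_eq {e : Equiv.Perm (ι → L)} {π : Equiv.Perm ι} {σ : ι → Equiv.Perm L}
    (hadd : ∀ i x y, σ i (x + y) = σ i x + σ i y)
    (hsmul : ∀ i (a : K) x, σ i (algebraMap K L a * x) = algebraMap K L a * σ i x)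
    (he : ∀ v i, e v i = σ i (v (π⁻¹ i))) :
    ∃ τ : ι → L ≃ₗ[K] L, wreathPerm π τ = e :=
  ⟨fun i => { σ i with
      map_add' := hadd i
      map_smul' := fun a x => by
        rw [Algebra.smul_def]
        exact (hsmul i a x).trans (Algebra.smul_def _ _).symm },
    Equiv.ext fun v => funext fun i => (he v i).symm⟩

theorem mem_autLSet_iff {C : Set (ι → L)} {e : Equiv.Perm (ι → L)} :
    e ∈ autLSet K C ↔ e ∈ wreathGroup (L ≃ₗ[K] L) L ι ∧ e '' C = C := by
  refine and_congr_left fun _ => ⟨?_, ?_⟩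
  · rintro ⟨π, σ, hadd, hsmul, he⟩
    exact ⟨π, exists_wreathPerm_eq hadd hsmul he⟩
  · rintro ⟨π, τ, rfl⟩
    refine ⟨π, fun i => (τ i).toEquiv, fun i => map_add (τ i), fun i a x => ?_, fun _ _ => rfl⟩
    rw [← Algebra.smul_def, ← Algebra.smul_def]
    exact map_smul (τ i) a x

theorem mul_mem_autLSet {C : Set (ι → L)} {e₁ e₂ : Equiv.Perm (ι → L)}
    (h₁ : e₁ ∈ autLSet K C) (h₂ : e₂ ∈ autLSet K C) : e₁ * e₂ ∈ autLSet K C := by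
  rw [mem_autLSet_iff] at *
  exact ⟨mul_mem h₁.1 h₂.1, by rw [Equiv.Perm.coe_mul, Set.image_comp, h₂.2, h₁.2]⟩

end Automorphisms

theorem IsLineTransversal.traceForm {K L Λ : Type*} [Field K] [Field L] [Algebra K L]
    [FiniteDimensional K L] [Algebra.IsSeparable K L] {b : Λ → L} (hb : IsLineTransversal K b) :
    IsLineTransversal K fun l => Algebra.traceForm K L (b l) :=
  hb.map ((Algebra.traceForm K L).toDual (traceForm_nondegenerate K L))

section FiniteField

theorem coprime_geomSum_sub_one_iff {p : ℕ} (hp : 1 ≤ p) (k : ℕ) :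
    (p - 1).Coprime (∑ i ∈ range k, p ^ i) ↔ (p - 1).Coprime k := by
  have hp_mod : p ≡ 1 [MOD p - 1] := ((Nat.modEq_iff_dvd' hp).2 dvd_rfl).symm
  have hsum : ∑ i ∈ range k, p ^ i ≡ k [MOD p - 1] :=
    calc ∑ i ∈ range k, p ^ i ≡ ∑ _i ∈ range k, 1 [MOD p - 1] :=
          Nat.ModEq.sum fun i _ => by simpa only [one_pow] using hp_mod.pow i
      _ = k := by simp
  rw [Nat.coprime_comm, Nat.Coprime, hsum.gcd_eq, ← Nat.Coprime, Nat.coprime_comm]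

theorem coprime_card_units_card_projectivization_iff (K V : Type*) [Field K] [Finite K]
    [AddCommGroup V] [Module K V] :
    (Nat.card Kˣ).Coprime (Nat.card (ℙ K V)) ↔ (Nat.card Kˣ).Coprime (Module.finrank K V) := by
  rw [Nat.card_units, Projectivization.card_of_finrank K V rfl,
    coprime_geomSum_sub_one_iff Nat.card_pos]

theorem eq_one_of_smul_pow_eq_pow {K A : Type*} [Field K] [Ring A] [Nontrivial A] [Algebra K A]
    {ξ : A} (hcop : (Nat.card Kˣ).Coprime (orderOf ξ)) {a : Kˣ} {i j : ℕ}
    (h : a • ξ ^ i = ξ ^ j) : a = 1 := by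
  have hpow (t : ℕ) : (ξ ^ t) ^ orderOf ξ = 1 := by rw [pow_right_comm, pow_orderOf_eq_one, one_pow]
  have hsmul : a ^ orderOf ξ • (1 : A) = 1 := by
    rw [← hpow i, ← smul_pow, h, hpow, hpow]
  have ha : a ^ orderOf ξ = 1 :=
    Units.ext (smul_left_injective K (one_ne_zero (α := A)) (by simpa [Units.smul_def] using hsmul))
  exact hcop.pow_left_bijective.injective (ha.trans (one_pow _).symm)

variable {K L : Type*} [Field K] [Field L] [Algebra K L] [Finite L]

theorem isLineTransversal_pow {m : ℕ} {ξ : L} (hcop : (Nat.card Kˣ).Coprime m)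
    (hm : m = Nat.card (ℙ K L)) (hξ : orderOf ξ = m) :
    IsLineTransversal K fun l : Fin m => ξ ^ ((l : ℕ) + 1) := by
  have hξ0 : ξ ≠ 0 := by
    refine (orderOf_pos_iff.1 ?_).isUnit.ne_zero
    rw [hξ, hm]
    exact Nat.card_pos
  refine ⟨fun l => pow_ne_zero _ hξ0, (Nat.bijective_iff_injective_and_card _).2 ⟨?_, ?_⟩⟩
  · intro l l' hll'
    obtain ⟨a, ha⟩ := (Projectivization.mk_eq_mk_iff K _ _ _ _).1 hll'
    obtain rfl : a = 1 := eq_one_of_smul_pow_eq_pow (hξ ▸ hcop) ha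
    have hpow : ξ ^ (l' : ℕ) = ξ ^ (l : ℕ) :=
      mul_right_cancel₀ hξ0 (by simpa only [one_smul, pow_succ] using ha)
    exact (Fin.ext (pow_injOn_Iio_orderOf (by simp [hξ]) (by simp [hξ]) hpow)).symm
  · rw [Nat.card_fin, hm]

theorem isLineTransversal_pow_of_card_eq_pow {p k m : ℕ} {ξ : L} (hcop : k.Coprime (p - 1))
    (hK : Nat.card K = p) (hL : Nat.card L = p ^ k) (hm : m = (p ^ k - 1) / (p - 1))
    (hξ : orderOf ξ = m) : IsLineTransversal K fun l : Fin m => ξ ^ ((l : ℕ) + 1) := by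
  have : Finite K := .of_injective _ (algebraMap K L).injective
  have hfinrank : Module.finrank K L = k := by
    refine Nat.pow_right_injective (hK ▸ Finite.one_lt_card) ?_
    exact (hK ▸ Module.natCard_eq_pow_finrank (K := K) (V := L)).symm.trans hL
  have hpoints : m = Nat.card (ℙ K L) := by rw [Projectivization.card'', hK, hL, hm]
  have hunits : (Nat.card Kˣ).Coprime m := by
    rw [hpoints, coprime_card_units_card_projectivization_iff, hfinrank, Nat.card_units, hK]
    exact hcop.symm
  exact isLineTransversal_pow hunits hpoints hξ

end FiniteField

theorem stmt_5_general {K L ι Λ : Type*} [Field K] [Field L] [Algebra K L]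
    {b : Λ → Module.Dual K L} (hb : IsLineTransversal K b) (C : Set (ι → L)) :
    ∃ f : Equiv.Perm (ι → L) → Equiv.Perm (ι × Λ → K),
      Set.MapsTo f (autLSet K C) (autMSet (concatMap b '' C)) ∧
      Set.InjOn f (autLSet K C) ∧
      (∀ e₁ ∈ autLSet K C, ∀ e₂ ∈ autLSet K C, f (e₁ * e₂) = f e₁ * f e₂) ∧
      ∀ e ∈ autLSet K C, ∀ (π : Equiv.Perm ι) (σ : ι → Equiv.Perm L),
        ((∀ i x y, σ i (x + y) = σ i x + σ i y) ∧
         (∀ i (a : K) (x : L), σ i (algebraMap K L a * x) = algebraMap K L a * σ i x) ∧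
         (∀ v i, e v i = σ i (v (π⁻¹ i)))) →
        ∃ (π' : Equiv.Perm (ι × Λ)) (c : ι × Λ → K),
          (∀ jl, c jl ≠ 0) ∧
          (∀ w jl, f e w jl = c jl * w (π'⁻¹ jl)) ∧
          ∀ jl, (π' jl).1 = π jl.1 := by
  have hlift : ∀ e ∈ autLSet K C, ∃ g ∈ wreathGroup Kˣ K (ι × Λ),
      ∀ v, g (concatMap b v) = concatMap b (e v) := by
    intro e he
    obtain ⟨⟨π, τ, rfl⟩, -⟩ := mem_autLSet_iff.1 he
    obtain ⟨π', c, -, h⟩ := hb.exists_wreathPerm_concatMap π τ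
    exact ⟨_, ⟨π', c, rfl⟩, h⟩
  choose! f hf_mem hf using hlift
  refine ⟨f, fun e he => mem_autMSet_iff.2 ⟨hf_mem e he, ?_⟩, fun e he e' he' hee' => ?_,
    fun e₁ h₁ e₂ h₂ => ?_, fun e he π σ ⟨hadd, hsmul, hσ⟩ => ?_⟩
  · rw [Set.image_image, Set.image_congr fun v _ => hf e he v, ← Set.image_image (concatMap b) e,
      (mem_autLSet_iff.1 he).2]
  · exact Equiv.ext fun v => hb.concatMap_injective (by rw [← hf e he, ← hf e' he', hee'])
  · have h₁₂ := mul_mem_autLSet h₁ h₂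
    have hmul_mem := mul_mem (hf_mem _ h₁) (hf_mem _ h₂)
    refine hb.eq_of_forall_concatMap_eq (hf_mem _ h₁₂) hmul_mem fun v => ?_
    simp only [Equiv.Perm.mul_apply, hf _ h₁₂, hf _ h₁, hf _ h₂]
  · obtain ⟨τ, rfl⟩ := exists_wreathPerm_eq hadd hsmul hσ
    obtain ⟨π', c, hπ', h⟩ := hb.exists_wreathPerm_concatMap π τ
    have hfe : f (wreathPerm π τ) = wreathPerm π' c :=
      hb.eq_of_forall_concatMap_eq (hf_mem _ he) ⟨π', c, rfl⟩ fun v => by rw [hf _ he, h]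
    exact ⟨π', fun jl => c jl, fun jl => (c jl).ne_zero, fun w jl => by rw [hfe]; rfl, hπ'⟩

/-- Let `C ⊆ F_q^n` be a linear code and `φ` the concatenation map of the
context.  There is an injective group homomorphism from `AutL_p(C)` into `AutM(φ(C))`
such that, for every element of `AutL_p(C)` with coordinate permutation `π`, the
coordinate permutation of its image maps each block `N_j = {j} × {1,…,n₀}` of coordinates
onto the block `N_{π(j)}`; in particular `AutL_p(C)` is isomorphic to a subgroup of
`AutM(φ(C))` acting imprimitively on the coordinates with blocks `N_1, …, N_n`. -/
theorem stmt_5 (p k n₀ : ℕ) (hk : 1 ≤ k) (hcop : Nat.Coprime k (p - 1))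
    (Fp Fq : Type) [Field Fp] [Field Fq] [Fintype Fp] [Fintype Fq]
    [DecidableEq Fp] [DecidableEq Fq] [Algebra Fp Fq]
    (hcp : Fintype.card Fp = p) (hcq : Fintype.card Fq = p ^ k)
    (hn₀ : n₀ = (p ^ k - 1) / (p - 1))
    (ξ : Fq) (hξ : orderOf ξ = n₀)
    (n : ℕ) (hn : 1 ≤ n)
    (Φ : (Fin n → Fq) → (Fin n × Fin n₀ → Fp))
    (hΦ : ∀ (v : Fin n → Fq) (jl : Fin n × Fin n₀),
      Φ v jl = Algebra.trace Fp Fq (v jl.1 * ξ ^ ((jl.2 : ℕ) + 1)))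
    (C : Submodule Fq (Fin n → Fq)) :
    ∃ f : Equiv.Perm (Fin n → Fq) → Equiv.Perm (Fin n × Fin n₀ → Fp),
      Set.MapsTo f (autLSet Fp (C : Set (Fin n → Fq)))
        (autMSet (Φ '' (C : Set (Fin n → Fq)))) ∧
      Set.InjOn f (autLSet Fp (C : Set (Fin n → Fq))) ∧
      (∀ e₁ ∈ autLSet Fp (C : Set (Fin n → Fq)), ∀ e₂ ∈ autLSet Fp (C : Set (Fin n → Fq)),
        f (e₁ * e₂) = f e₁ * f e₂) ∧
      ∀ e ∈ autLSet Fp (C : Set (Fin n → Fq)),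
        ∀ (π : Equiv.Perm (Fin n)) (σ : Fin n → Equiv.Perm Fq),
          ((∀ i x y, σ i (x + y) = σ i x + σ i y) ∧
           (∀ i (b : Fp) (x : Fq), σ i (algebraMap Fp Fq b * x) = algebraMap Fp Fq b * σ i x) ∧
           (∀ v i, e v i = σ i (v (π⁻¹ i)))) →
          ∃ (π' : Equiv.Perm (Fin n × Fin n₀)) (cst : Fin n × Fin n₀ → Fp),
            (∀ jl, cst jl ≠ 0) ∧
            (∀ w jl, f e w jl = cst jl * w (π'⁻¹ jl)) ∧
            ∀ jl : Fin n × Fin n₀, (π' jl).1 = π jl.1 := by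
  have hb := isLineTransversal_pow_of_card_eq_pow (K := Fp) hcop (by simp [hcp]) (by simp [hcq])
    hn₀ hξ
  obtain rfl : Φ = concatMap fun l : Fin n₀ => Algebra.traceForm Fp Fq (ξ ^ ((l : ℕ) + 1)) :=
    funext₂ fun v jl => by rw [hΦ, mul_comm, concatMap, Algebra.traceForm_apply]
  exact stmt_5_general hb.traceForm (C : Set (Fin n → Fq))
end

section
/- Let m ≥ 1 and q = 2^m. The binary code K_q^⊥ = {(Tr_{q²/2}(δα^l) + Tr_{q/2}(cθ^l))_{l=1,…,q²−1} : c ∈ F_q, δ ∈ F_{q²}} ⊆ F_2^{q²−1} has weight distribution: one codeword of weight 0, exactly q(q²−1)/2 codewords of weight (q²−q)/2, exactly q²−1 codewords of weight q²/2, and exactly (q³−2q²+q)/2 codewords of weight (q²+q)/2. -/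
open Finset

/-!
For `c ≠ 0`, completing the square with `N (x + y) = N x + N y + Tr (x * y ^ q)` shows that
`Tr (δ * x) + Tr (c * N x)` is a translate of `x ↦ Tr (c * N x)` minus the constant
`Tr (N δ / c)`. The norm is `(q + 1)`-to-one on units and the trace takes every value equally
often, so the weight of a codeword depends only on whether `c = 0` and whether that constant
vanishes; the weight distribution counts the parameters `(c, δ)` in each case. The argument works
over any finite base field, with `r` elements, in place of the field with two elements.
-/

namespace Kasami

section Counting

@[to_additive card_mul_card_filter_addMonoidHom]
theorem card_mul_card_filter_monoidHom {G H : Type*} [Group G] [Group H] [Fintype G] [Fintype H]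
    {f : G →* H} (hf : Function.Surjective f) (P : H → Prop) [DecidablePred P] :
    Fintype.card H * #{x | P (f x)} = Fintype.card G * #{y | P y} := by
  classical
  have hfiber (y : H) : #{x | f x = y} = #{x | f x = 1} :=
    MonoidHom.card_fiber_eq_of_mem_range f (hf y) (hf 1)
  have hG : Fintype.card G = Fintype.card H * #{x | f x = 1} := by
    rw [← card_univ, card_eq_sum_card_fiberwise fun x _ => mem_coe.2 (mem_univ (f x))]
    simp only [hfiber, sum_const, card_univ, smul_eq_mul]
  have hP : #{x | P (f x)} = #{y | P y} * #{x | f x = 1} := by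
    have h := sum_card_fiberwise_eq_card_filter univ {y | P y} f
    simpa only [hfiber, sum_const, smul_eq_mul, mem_filter_univ] using h.symm
  rw [hG, hP]
  ring

theorem card_filter_ne_zero {M : Type*} [Zero M] [Fintype M] [DecidableEq M] :
    #{x : M | x ≠ 0} = Fintype.card M - 1 := by
  rw [filter_ne', card_erase_of_mem (mem_univ _), card_univ]

theorem card_filter_units {L : Type*} [GroupWithZero L] [Fintype L] [DecidableEq L]
    (P : L → Prop) [DecidablePred P] (h0 : ¬ P 0) :
    #{u : Lˣ | P u} = #{x : L | P x} := by
  refine card_bij (fun u _ => u) (by simp) (fun _ _ _ _ => Units.ext) fun x hx => ?_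
  have hP : P x := (mem_filter.1 hx).2
  exact ⟨.mk0 x (by rintro rfl; exact h0 hP), by simpa using hP, rfl⟩

theorem card_sub_one_mul_card_filter_norm {F K : Type*} [Field F] [Field K] [Fintype F]
    [Fintype K] [Algebra F K] (P : F → Prop) [DecidablePred P] (h0 : ¬ P 0) :
    (Fintype.card F - 1) * #{x : K | P (Algebra.norm F x)} =
      (Fintype.card K - 1) * #{u | P u} := by
  classical
  have h0' : ¬ P (Algebra.norm F (0 : K)) := by rwa [Algebra.norm_zero]
  rw [← card_filter_units P h0, ← card_filter_units (fun x : K => P (Algebra.norm F x)) h0',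
    ← Fintype.card_units, ← Fintype.card_units]
  exact card_mul_card_filter_monoidHom (FiniteField.unitsMap_norm_surjective F K) (fun u => P u)

theorem trace_mul_surjective {k L : Type*} [Field k] [Field L] [Algebra k L] [FiniteDimensional k L]
    [Algebra.IsSeparable k L] {a : L} (ha : a ≠ 0) :
    Function.Surjective fun x => Algebra.trace k L (a * x) :=
  (Algebra.trace_surjective k L).comp (mul_left_surjective₀ ha)

theorem card_mul_card_filter_trace_mul {k L : Type*} [Field k] [Field L] [Fintype k] [Fintype L]
    [Algebra k L] {a : L} (ha : a ≠ 0) (P : k → Prop) [DecidablePred P] :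
    Fintype.card k * #{x | P (Algebra.trace k L (a * x))} = Fintype.card L * #{y | P y} :=
  card_mul_card_filter_addMonoidHom
    (f := (Algebra.trace k L).toAddMonoidHom.comp (AddMonoidHom.mulLeft a))
    (trace_mul_surjective ha) P

theorem hammingNorm_comp_pow_succ {L M : Type*} [GroupWithZero L] [Fintype L] [Zero M]
    [DecidableEq M] {f : L → M} (h0 : f 0 = 0) {a : L} {n : ℕ}
    (hn : n + 1 = Fintype.card L) (ha : orderOf a = n) :
    hammingNorm (fun l : Fin n => f (a ^ ((l : ℕ) + 1))) = hammingNorm f := by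
  classical
  have hn0 : n ≠ 0 := by
    have := Fintype.one_lt_card (α := L)
    lia
  have ha0 : a ≠ 0 := by
    rintro rfl
    exact hn0 (by rw [← ha, orderOf_zero])
  have hinj : Function.Injective fun l : Fin n => a ^ ((l : ℕ) + 1) := by
    intro l l' h
    have hpow : a ^ (l : ℕ) = a ^ (l' : ℕ) :=
      mul_right_cancel₀ ha0 (by simpa only [pow_succ] using h)
    exact Fin.ext (pow_injOn_Iio_orderOf (by simp [ha]) (by simp [ha]) hpow)
  have himage : univ.image (fun l : Fin n => a ^ ((l : ℕ) + 1)) = univ.erase 0 := by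
    refine eq_of_subset_of_card_le (by simp [image_subset_iff, ha0]) ?_
    rw [card_image_of_injective _ hinj, card_erase_of_mem (mem_univ _), card_univ, ← hn]
    simp
  simp only [hammingNorm, card_filter]
  rw [← sum_erase univ (a := (0 : L)) (by simp [h0]), ← himage, sum_image hinj.injOn]

end Counting

section QuadraticExtension

theorem isQuadraticExtension_of_card {F K : Type*} [Field F] [Field K] [Fintype F] [Fintype K]
    [Algebra F K] (h : Fintype.card K = Fintype.card F ^ 2) : Algebra.IsQuadraticExtension F K where
  finrank_eq_two' := Nat.pow_right_injective (Fintype.one_lt_card (α := F))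
    (Module.card_eq_pow_finrank.symm.trans h)

variable {F K : Type*} [Field F] [Field K] [Fintype F] [Algebra F K]
  [Algebra.IsQuadraticExtension F K]

variable (F K) in
theorem card_eq_sq [Fintype K] : Fintype.card K = Fintype.card F ^ 2 := by
  rw [Module.card_eq_pow_finrank (K := F), Algebra.IsQuadraticExtension.finrank_eq_two]

theorem algebraMap_norm_eq_mul_pow (x : K) :
    algebraMap F K (Algebra.norm F x) = x * x ^ Fintype.card F := by
  have : Finite K := Module.finite_of_finite F
  simp [FiniteField.algebraMap_norm_eq_prod_pow, Algebra.IsQuadraticExtension.finrank_eq_two,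
    prod_range_succ]

theorem algebraMap_trace_eq_add_pow (x : K) :
    algebraMap F K (Algebra.trace F K x) = x + x ^ Fintype.card F := by
  have : Finite K := Module.finite_of_finite F
  simp [FiniteField.algebraMap_trace_eq_sum_pow, Algebra.IsQuadraticExtension.finrank_eq_two,
    sum_range_succ]

variable (F) in
theorem pow_card_pow_card (x : K) : (x ^ Fintype.card F) ^ Fintype.card F = x := by
  have : Finite K := Module.finite_of_finite F
  have := Fintype.ofFinite K
  rw [← pow_mul, ← sq, ← card_eq_sq F K, FiniteField.pow_card]

theorem norm_add (x y : K) :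
    Algebra.norm F (x + y) = Algebra.norm F x + Algebra.norm F y +
      Algebra.trace F K (x * y ^ Fintype.card F) := by
  have hfrob : (x + y) ^ Fintype.card F = x ^ Fintype.card F + y ^ Fintype.card F :=
    map_add (FiniteField.frobeniusAlgHom F K) x y
  apply (algebraMap F K).injective
  simp only [map_add, algebraMap_norm_eq_mul_pow, algebraMap_trace_eq_add_pow, hfrob, mul_pow,
    pow_card_pow_card]
  ring

theorem mul_norm_add_trace_mul {c : F} (hc : c ≠ 0) (δ x : K) :
    c * Algebra.norm F x + Algebra.trace F K (δ * x) =
      c * Algebra.norm F (x + (c⁻¹ • δ) ^ Fintype.card F) - c⁻¹ * Algebra.norm F δ := by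
  have hnorm : Algebra.norm F (c⁻¹ • δ) = c⁻¹ ^ 2 * Algebra.norm F δ := by
    rw [Algebra.smul_def, map_mul, Algebra.norm_algebraMap,
      Algebra.IsQuadraticExtension.finrank_eq_two]
  have htrace : Algebra.trace F K (x * c⁻¹ • δ) = c⁻¹ * Algebra.trace F K (δ * x) := by
    rw [mul_smul_comm, map_smul, smul_eq_mul, mul_comm x]
  rw [norm_add, pow_card_pow_card, map_pow, FiniteField.pow_card, hnorm, htrace]
  field_simp
  ring

theorem card_mul_card_filter_trace_mul_norm [Fintype K] {k : Type*} [Field k] [Fintype k]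
    [Algebra k F] {c : F} (hc : c ≠ 0) (P : k → Prop) [DecidablePred P] (h0 : ¬ P 0) :
    Fintype.card k * #{x : K | P (Algebra.trace k F (c * Algebra.norm F x))} =
      (Fintype.card F ^ 2 + Fintype.card F) * #{y | P y} := by
  have hnorm := card_sub_one_mul_card_filter_norm (K := K)
    (fun u => P (Algebra.trace k F (c * u))) (by simpa using h0)
  rw [card_eq_sq F K, ← one_pow 2, Nat.sq_sub_sq, one_pow, mul_comm (_ + 1), mul_assoc] at hnorm
  rw [Nat.eq_of_mul_eq_mul_left (Nat.sub_pos_of_lt Fintype.one_lt_card) hnorm, mul_left_comm,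
    card_mul_card_filter_trace_mul hc]
  ring

end QuadraticExtension

section Form

variable {k F K : Type*} [Field k] [Field F] [Field K] [Algebra k F] [Algebra k K] [Algebra F K]

/-- The function `x ↦ Tr_{K/k}(δ x) + Tr_{F/k}(c N_{K/F}(x))` attached to `p = (c, δ)`. Its values
at the powers of a primitive element `α` of `K` are the coordinates of a codeword, because
`N_{K/F}(α) = α ^ (q + 1)` for `q = |F|`. -/
noncomputable def form (p : F × K) (x : K) : k :=
  Algebra.trace k K (p.2 * x) + Algebra.trace k F (p.1 * Algebra.norm F x)

variable (k) in
/-- The element `Tr_{F/k}(N_{K/F}(δ) / c)` of `k` attached to `p = (c, δ)`, which is the constant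
left over after completing the square in `form p` for `c ≠ 0`. It is `0` for `c = 0`, where
`c⁻¹ = 0`. -/
noncomputable def offset (p : F × K) : k :=
  Algebra.trace k F (p.1⁻¹ * Algebra.norm F p.2)

theorem form_zero_left : form (0 : F × K) = (0 : K → k) := by
  ext x
  simp [form]

theorem form_sub (p p' : F × K) : form (p - p') = (form p - form p' : K → k) := by
  ext x
  simp only [form, Prod.fst_sub, Prod.snd_sub, sub_mul, map_sub, Pi.sub_apply]
  ring

omit [Algebra k K] in
theorem fst_ne_zero_of_offset_ne_zero {p : F × K} (h : offset k p ≠ 0) : p.1 ≠ 0 := by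
  intro h0
  simp [offset, h0] at h

theorem form_zero_right [FiniteDimensional F K] (p : F × K) : form p (0 : K) = (0 : k) := by
  simp [form, Algebra.norm_zero]

theorem form_eq_trace_sub_offset [Fintype F] [Algebra.IsQuadraticExtension F K]
    [IsScalarTower k F K] {p : F × K} (hp : p.1 ≠ 0) (x : K) :
    form p x = Algebra.trace k F
      (p.1 * Algebra.norm F (x + (p.1⁻¹ • p.2) ^ Fintype.card F)) - offset k p := by
  rw [form, offset, ← Algebra.trace_trace (S := F), add_comm, ← map_add, ← map_sub,
    mul_norm_add_trace_mul hp]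

end Form

section Weight

/-- These are the nonzero weights of the code over a field with `r` elements. -/
theorem weight_values_lt {r q : ℕ} (hr : 1 < r) (hq : q ≠ 0) (hrq : r ∣ q) :
    0 < ((r - 1) * q ^ 2 - q) / r ∧
    ((r - 1) * q ^ 2 - q) / r < (r - 1) * q ^ 2 / r ∧
    (r - 1) * q ^ 2 / r < (r - 1) * (q ^ 2 + q) / r := by
  have hr' : 1 ≤ r - 1 := Nat.le_sub_one_of_lt hr
  have hq1 : 1 < q := hr.trans_le (Nat.le_of_dvd (Nat.pos_of_ne_zero hq) hrq)
  have hlow : q < (r - 1) * q ^ 2 := by nlinarith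
  have hmid_dvd : r ∣ (r - 1) * q ^ 2 := (hrq.pow two_ne_zero).mul_left _
  refine ⟨?_, ?_, ?_⟩
  · exact Nat.div_pos (Nat.le_of_dvd (by lia) (Nat.dvd_sub hmid_dvd hrq)) (by lia)
  · exact Nat.div_lt_div_of_lt_of_dvd hmid_dvd (by lia)
  · refine Nat.div_lt_div_of_lt_of_dvd (((hrq.pow two_ne_zero).add hrq).mul_left _) ?_
    gcongr
    lia

variable {k F K : Type*} [Field k] [Field F] [Field K] [DecidableEq k] [Fintype K]
  [Algebra k F] [Algebra k K] [Algebra F K]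

theorem card_mul_hammingNorm_form_of_fst_eq_zero [Fintype k] {p : F × K} (hfst : p.1 = 0)
    (hsnd : p.2 ≠ 0) :
    Fintype.card k * hammingNorm (form p : K → k) = (Fintype.card k - 1) * Fintype.card K := by
  have := card_mul_card_filter_trace_mul hsnd (fun y : k => y ≠ 0)
  rw [card_filter_ne_zero] at this
  simpa [hammingNorm, form, hfst, mul_comm] using this

variable [Algebra.IsQuadraticExtension F K] [IsScalarTower k F K]

theorem hammingNorm_form_of_fst_ne_zero [Finite F] {p : F × K} (hfst : p.1 ≠ 0) :
    hammingNorm (form p : K → k) =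
      #{x : K | Algebra.trace k F (p.1 * Algebra.norm F x) ≠ offset k p} := by
  have := Fintype.ofFinite F
  refine card_equiv (Equiv.addRight ((p.1⁻¹ • p.2) ^ Fintype.card F)) fun x => ?_
  simp [form_eq_trace_sub_offset hfst, sub_eq_zero]

variable [Fintype k] [Fintype F]

local notation "q" => Fintype.card F
local notation "r" => Fintype.card k

theorem card_mul_hammingNorm_form_of_offset_eq_zero {p : F × K} (hfst : p.1 ≠ 0)
    (hoff : offset k p = 0) :
    r * hammingNorm (form p : K → k) = (r - 1) * (q ^ 2 + q) := by
  rw [hammingNorm_form_of_fst_ne_zero hfst, hoff,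
    card_mul_card_filter_trace_mul_norm hfst (fun y : k => y ≠ 0) (by simp), card_filter_ne_zero,
    mul_comm]

theorem card_mul_hammingNorm_form_of_offset_ne_zero {p : F × K} (hoff : offset k p ≠ 0) :
    r * hammingNorm (form p : K → k) = (r - 1) * q ^ 2 - q := by
  have hfst := fst_ne_zero_of_offset_ne_zero hoff
  have hfiber : r * #{x : K | Algebra.trace k F (p.1 * Algebra.norm F x) = offset k p} =
      q ^ 2 + q := by
    rw [card_mul_card_filter_trace_mul_norm hfst (fun y : k => y = offset k p) hoff.symm]
    simp [filter_eq']
  have hsum : r * #{x : K | Algebra.trace k F (p.1 * Algebra.norm F x) = offset k p} +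
      r * hammingNorm (form p : K → k) = r * q ^ 2 := by
    rw [hammingNorm_form_of_fst_ne_zero hfst, ← mul_add, card_filter_add_card_filter_not, card_univ,
      card_eq_sq F K]
  rw [Nat.sub_mul, one_mul]
  lia

theorem hammingNorm_form_cases (p : F × K) :
    (p = 0 ∧ hammingNorm (form p : K → k) = 0) ∨
    (offset k p ≠ 0 ∧ hammingNorm (form p : K → k) = ((r - 1) * q ^ 2 - q) / r) ∨
    ((p.1 = 0 ∧ p.2 ≠ 0) ∧ hammingNorm (form p : K → k) = (r - 1) * q ^ 2 / r) ∨
    ((p.1 ≠ 0 ∧ offset k p = 0) ∧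
      hammingNorm (form p : K → k) = (r - 1) * (q ^ 2 + q) / r) := by
  have eq_div {w n : ℕ} (h : r * w = n) : w = n / r :=
    Nat.eq_div_of_mul_eq_right Fintype.card_ne_zero h
  by_cases hoff : offset k p = 0
  · by_cases hfst : p.1 = 0
    · by_cases hsnd : p.2 = 0
      · have hp : p = 0 := Prod.ext hfst hsnd
        exact .inl ⟨hp, by rw [hp, form_zero_left, hammingNorm_zero]⟩
      · have h := card_mul_hammingNorm_form_of_fst_eq_zero (k := k) hfst hsnd
        rw [card_eq_sq F K] at h
        exact .inr <| .inr <| .inl ⟨⟨hfst, hsnd⟩, eq_div h⟩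
    · exact .inr <| .inr <| .inr
        ⟨⟨hfst, hoff⟩, eq_div (card_mul_hammingNorm_form_of_offset_eq_zero hfst hoff)⟩
  · exact .inr <| .inl ⟨hoff, eq_div (card_mul_hammingNorm_form_of_offset_ne_zero hoff)⟩

theorem hammingNorm_form_eq_iff (p : F × K) :
    (hammingNorm (form p : K → k) = 0 ↔ p = 0) ∧
    (hammingNorm (form p : K → k) = ((r - 1) * q ^ 2 - q) / r ↔ offset k p ≠ 0) ∧
    (hammingNorm (form p : K → k) = (r - 1) * q ^ 2 / r ↔ p.1 = 0 ∧ p.2 ≠ 0) ∧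
    (hammingNorm (form p : K → k) = (r - 1) * (q ^ 2 + q) / r ↔ p.1 ≠ 0 ∧ offset k p = 0) := by
  have hrq : r ∣ q := by
    rw [Module.card_eq_pow_finrank (K := k) (V := F)]
    exact dvd_pow_self _ Module.finrank_pos.ne'
  obtain ⟨hlow, hmid, hhigh⟩ := weight_values_lt Fintype.one_lt_card Fintype.card_ne_zero hrq
  have hoff := fst_ne_zero_of_offset_ne_zero (k := k) (p := p)
  have hcases := hammingNorm_form_cases (k := k) p
  simp only [Prod.ext_iff, Prod.fst_zero, Prod.snd_zero] at hcases ⊢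
  generalize ((r - 1) * q ^ 2 - q) / r = low at *
  generalize (r - 1) * q ^ 2 / r = mid at *
  generalize (r - 1) * (q ^ 2 + q) / r = high at *
  clear hrq
  grind

end Weight

section Count

variable {k F K : Type*} [Field k] [Field F] [Field K] [Fintype F] [Fintype K]
  [DecidableEq k] [Algebra k F] [Algebra F K] [Algebra.IsQuadraticExtension F K]

local notation "q" => Fintype.card F
local notation "r" => Fintype.card k

theorem card_mul_card_offset_ne_zero [Fintype k] :
    r * #{p : F × K | offset k p ≠ 0} = (r - 1) * (q * (q ^ 2 - 1)) := by
  classical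
  have hcount (c : F) (hc : c ≠ 0) :
      r * #{δ : K | offset k (c, δ) ≠ 0} = (q ^ 2 + q) * (r - 1) := by
    rw [← card_filter_ne_zero]
    exact card_mul_card_filter_trace_mul_norm (inv_ne_zero hc) (· ≠ 0) (by simp)
  calc r * #{p : F × K | offset k p ≠ 0}
      = ∑ c : F, r * #{δ : K | offset k (c, δ) ≠ 0} := by
        simp only [card_filter, Fintype.sum_prod_type, mul_sum]
    _ = ∑ c : F with c ≠ 0, (q ^ 2 + q) * (r - 1) := by
        rw [sum_filter]
        refine sum_congr rfl fun c _ => ?_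
        split_ifs with hc
        · exact hcount c hc
        · simp [offset, not_not.1 hc]
    _ = (r - 1) * (q * (q ^ 2 - 1)) := by
        rw [sum_const, card_filter_ne_zero, smul_eq_mul, ← one_pow 2, Nat.sq_sub_sq, one_pow]
        ring

theorem card_offset_ne_zero [Fintype k] :
    #{p : F × K | offset k p ≠ 0} = (r - 1) * (q * (q ^ 2 - 1)) / r :=
  Nat.eq_div_of_mul_eq_right Fintype.card_ne_zero card_mul_card_offset_ne_zero

variable [DecidableEq F]

theorem card_fst_eq_zero_snd_ne_zero [DecidableEq K] :
    #{p : F × K | p.1 = 0 ∧ p.2 ≠ 0} = q ^ 2 - 1 := by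
  rw [← univ_product_univ, filter_product (· = 0) (· ≠ 0), card_product, card_filter_ne_zero,
    card_eq_sq F K]
  simp [filter_eq']

theorem card_fst_ne_zero : #{p : F × K | p.1 ≠ 0} = (q - 1) * q ^ 2 := by
  have := congrArg card (filter_product_left (s := univ) (t := (univ : Finset K)) (· ≠ (0 : F)))
  rwa [univ_product_univ, card_product, card_filter_ne_zero, card_univ, card_eq_sq F K] at this

theorem card_offset_ne_zero_add_card_fst_ne_zero_offset_eq_zero :
    #{p : F × K | offset k p ≠ 0} + #{p : F × K | p.1 ≠ 0 ∧ offset k p = 0} =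
      (q - 1) * q ^ 2 := by
  have hfst : #{p : F × K | offset k p ≠ 0} = #{p : F × K | p.1 ≠ 0 ∧ offset k p ≠ 0} :=
    congrArg card <| filter_congr fun p _ =>
      ⟨fun h => ⟨fst_ne_zero_of_offset_ne_zero h, h⟩, And.right⟩
  rw [hfst, ← card_fst_ne_zero (K := K), ← filter_filter, ← filter_filter, add_comm,
    card_filter_add_card_filter_not]

theorem card_mul_card_fst_ne_zero_offset_eq_zero [Fintype k] :
    r * #{p : F × K | p.1 ≠ 0 ∧ offset k p = 0} = q ^ 3 - r * q ^ 2 + (r - 1) * q := by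
  have hlow := card_mul_card_offset_ne_zero (k := k) (F := F) (K := K)
  have hsum := card_offset_ne_zero_add_card_fst_ne_zero_offset_eq_zero (k := k) (F := F) (K := K)
  have hrq : r ≤ q := Fintype.card_le_of_injective _ (algebraMap k F).injective
  have hr : 1 ≤ r := Fintype.card_pos
  have hq : 1 ≤ q := Fintype.card_pos
  have hq2 : 1 ≤ q ^ 2 := Nat.one_le_pow _ _ hq
  have hq3 : r * q ^ 2 ≤ q ^ 3 := by
    rw [pow_succ' q 2]
    gcongr
  zify [hr, hq, hq2, hq3] at hlow hsum ⊢
  linear_combination (r : ℤ) * hsum - hlow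

theorem card_fst_ne_zero_offset_eq_zero [Fintype k] :
    #{p : F × K | p.1 ≠ 0 ∧ offset k p = 0} = (q ^ 3 - r * q ^ 2 + (r - 1) * q) / r :=
  Nat.eq_div_of_mul_eq_right Fintype.card_ne_zero card_mul_card_fst_ne_zero_offset_eq_zero

variable (k F K) in
omit [DecidableEq k] [DecidableEq F] in
theorem card_prod_eq_sum [Fintype k] :
    Fintype.card (F × K) = 1 + (r - 1) * (q * (q ^ 2 - 1)) / r + (q ^ 2 - 1) +
      (q ^ 3 - r * q ^ 2 + (r - 1) * q) / r := by
  classical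
  have hsum := card_offset_ne_zero_add_card_fst_ne_zero_offset_eq_zero (k := k) (F := F) (K := K)
  rw [card_offset_ne_zero, card_fst_ne_zero_offset_eq_zero, Nat.sub_mul q, one_mul] at hsum
  have hq : 1 ≤ q ^ 2 := Nat.one_le_pow _ _ Fintype.card_pos
  have hq3 : q ^ 2 ≤ q * q ^ 2 := Nat.le_mul_of_pos_left _ Fintype.card_pos
  rw [Fintype.card_prod, card_eq_sq F K]
  lia

end Count

section Code

variable {k F K : Type*} [Field k] [Field F] [Field K] [Algebra k F] [Algebra k K] [Algebra F K]

/-- The codeword attached to `p = (c, δ)`: the values of `form p` at `α, α², …, αⁿ`. -/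
noncomputable def codeword (α : K) (n : ℕ) (p : F × K) : Fin n → k :=
  fun l => form p (α ^ ((l : ℕ) + 1))

theorem codeword_sub (α : K) (n : ℕ) (p p' : F × K) :
    codeword α n (p - p') = (codeword α n p - codeword α n p' : Fin n → k) := by
  ext l
  simp only [codeword, form_sub, Pi.sub_apply]

theorem setOf_eq_range_codeword [Fintype F] [Algebra.IsQuadraticExtension F K] {α : K} {θ : F}
    (hθ : algebraMap F K θ = α ^ (Fintype.card F + 1)) (n : ℕ) :
    {w : Fin n → k | ∃ (c : F) (δ : K), ∀ l : Fin n,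
      w l = Algebra.trace k K (δ * α ^ ((l : ℕ) + 1)) +
        Algebra.trace k F (c * θ ^ ((l : ℕ) + 1))} =
      Set.range (codeword α n : F × K → Fin n → k) := by
  have hnorm : Algebra.norm F α = θ := by
    apply (algebraMap F K).injective
    rw [algebraMap_norm_eq_mul_pow, hθ, pow_succ']
  ext w
  simp only [Set.mem_ofPred_eq, Set.mem_range, Prod.exists, funext_iff, codeword, form, map_pow,
    hnorm, eq_comm (a := w _)]

variable [Algebra.IsQuadraticExtension F K] [Fintype K]

theorem hammingNorm_codeword [DecidableEq k] {α : K} {n : ℕ} (hn : n + 1 = Fintype.card K)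
    (hα : orderOf α = n) (p : F × K) :
    hammingNorm (codeword α n p : Fin n → k) = hammingNorm (form p : K → k) :=
  hammingNorm_comp_pow_succ (form_zero_right p) hn hα

variable [IsScalarTower k F K]

theorem codeword_injective {α : K} {n : ℕ} (hn : n + 1 = Fintype.card K) (hα : orderOf α = n) :
    Function.Injective (codeword α n : F × K → Fin n → k) := by
  classical
  have := Fintype.ofInjective _ (algebraMap F K).injective
  have := Fintype.ofInjective _ (algebraMap k F).injective
  intro p p' h
  rw [← sub_eq_zero, ← (hammingNorm_form_eq_iff (k := k) (p - p')).1,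
    ← hammingNorm_codeword hn hα, codeword_sub, h, sub_self, hammingNorm_zero]

theorem ncard_range_codeword [Fintype F] {α : K} {n : ℕ} (hn : n + 1 = Fintype.card K)
    (hα : orderOf α = n) :
    (Set.range (codeword α n : F × K → Fin n → k)).ncard = Fintype.card (F × K) := by
  rw [← Set.image_univ, Set.ncard_image_of_injective _ (codeword_injective hn hα),
    Set.ncard_univ, Nat.card_eq_fintype_card]

theorem ncard_sep_range_codeword [Fintype F] [DecidableEq k] {α : K} {n : ℕ}
    (hn : n + 1 = Fintype.card K) (hα : orderOf α = n) (j : ℕ) :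
    {w ∈ Set.range (codeword α n : F × K → Fin n → k) | hammingNorm w = j}.ncard =
      #{p : F × K | hammingNorm (form p : K → k) = j} := by
  have himage : {w ∈ Set.range (codeword α n : F × K → Fin n → k) | hammingNorm w = j} =
      codeword α n '' (↑({p | hammingNorm (form p : K → k) = j} : Finset (F × K)) :
        Set (F × K)) := by
    ext w
    constructor
    · rintro ⟨⟨p, rfl⟩, hp⟩
      exact ⟨p, by simpa [hammingNorm_codeword hn hα] using hp, rfl⟩
    · rintro ⟨p, hp, rfl⟩
      exact ⟨⟨p, rfl⟩, by simpa [hammingNorm_codeword hn hα] using hp⟩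
  rw [himage, Set.ncard_image_of_injective _ (codeword_injective hn hα), Set.ncard_coe_finset]

variable [Fintype k] [Fintype F] [DecidableEq k]

local notation "q" => Fintype.card F
local notation "r" => Fintype.card k

theorem card_filter_hammingNorm_form_eq :
    #{p : F × K | hammingNorm (form p : K → k) = 0} = 1 ∧
    #{p : F × K | hammingNorm (form p : K → k) = ((r - 1) * q ^ 2 - q) / r} =
      (r - 1) * (q * (q ^ 2 - 1)) / r ∧
    #{p : F × K | hammingNorm (form p : K → k) = (r - 1) * q ^ 2 / r} = q ^ 2 - 1 ∧
    #{p : F × K | hammingNorm (form p : K → k) = (r - 1) * (q ^ 2 + q) / r} =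
      (q ^ 3 - r * q ^ 2 + (r - 1) * q) / r := by
  classical
  have hiff := hammingNorm_form_eq_iff (k := k) (F := F) (K := K)
  simp only [fun p => (hiff p).1, fun p => (hiff p).2.1, fun p => (hiff p).2.2.1,
    fun p => (hiff p).2.2.2]
  exact ⟨by simp [filter_eq'], card_offset_ne_zero, card_fst_eq_zero_snd_ne_zero,
    card_fst_ne_zero_offset_eq_zero⟩

end Code

end Kasami

open Kasami

theorem stmt_8_general {k F K : Type*} [Field k] [Field F] [Field K] [Fintype k] [Fintype F]
    [Fintype K] [DecidableEq k] [Algebra k F] [Algebra k K] [Algebra F K] [IsScalarTower k F K]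
    (r q : ℕ) (hk : Fintype.card k = r) (hF : Fintype.card F = q) (hcK : Fintype.card K = q ^ 2)
    (α : K) (hα : orderOf α = q ^ 2 - 1) (θ : F) (hθ : algebraMap F K θ = α ^ (q + 1))
    (Kdual : Set (Fin (q ^ 2 - 1) → k))
    (hK : Kdual = {w | ∃ (c : F) (δ : K), ∀ l : Fin (q ^ 2 - 1),
        w l = Algebra.trace k K (δ * α ^ ((l : ℕ) + 1)) +
          Algebra.trace k F (c * θ ^ ((l : ℕ) + 1))}) :
    {w ∈ Kdual | hammingNorm w = 0}.ncard = 1 ∧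
    {w ∈ Kdual | hammingNorm w = ((r - 1) * q ^ 2 - q) / r}.ncard =
      (r - 1) * (q * (q ^ 2 - 1)) / r ∧
    {w ∈ Kdual | hammingNorm w = (r - 1) * q ^ 2 / r}.ncard = q ^ 2 - 1 ∧
    {w ∈ Kdual | hammingNorm w = (r - 1) * (q ^ 2 + q) / r}.ncard =
      (q ^ 3 - r * q ^ 2 + (r - 1) * q) / r ∧
    Kdual.ncard = 1 + (r - 1) * (q * (q ^ 2 - 1)) / r + (q ^ 2 - 1) +
      (q ^ 3 - r * q ^ 2 + (r - 1) * q) / r := by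
  subst hk hF
  have := isQuadraticExtension_of_card hcK
  have hn : Fintype.card F ^ 2 - 1 + 1 = Fintype.card K := by
    rw [hcK, Nat.sub_add_cancel (Nat.one_le_pow _ _ Fintype.card_pos)]
  rw [setOf_eq_range_codeword hθ] at hK
  subst hK
  obtain ⟨hzero, hlow, hmid, hhigh⟩ := card_filter_hammingNorm_form_eq (k := k) (F := F) (K := K)
  simp only [ncard_sep_range_codeword hn hα, ncard_range_codeword hn hα]
  exact ⟨hzero, hlow, hmid, hhigh, card_prod_eq_sum k F K⟩

/-- Let `m ≥ 1`, `q = 2^m`, and let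
`K_q^⊥ = {(Tr_{q²/2}(δα^l) + Tr_{q/2}(cθ^l))_{l=1,…,q²−1} : c ∈ F_q, δ ∈ F_{q²}}` be the
dual of the Kasami code.  Its weight distribution is: one codeword of weight `0`, exactly
`q(q²−1)/2` codewords of weight `(q²−q)/2`, exactly `q²−1` codewords of weight `q²/2`,
and exactly `(q³−2q²+q)/2` codewords of weight `(q²+q)/2`. -/
theorem stmt_8 (m q : ℕ) (hm : 1 ≤ m) (hq : q = 2 ^ m)
    (F K : Type) [Field F] [Field K] [Fintype F] [Fintype K]
    [Algebra (ZMod 2) F] [Algebra (ZMod 2) K] [Algebra F K] [IsScalarTower (ZMod 2) F K]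
    (hcF : Fintype.card F = q) (hcK : Fintype.card K = q ^ 2)
    (α : K) (hα : orderOf α = q ^ 2 - 1)
    (θ : F) (hθ : algebraMap F K θ = α ^ (q + 1))
    (Kdual : Set (Fin (q ^ 2 - 1) → ZMod 2))
    (hK : Kdual = {w | ∃ (c : F) (δ : K), ∀ l : Fin (q ^ 2 - 1),
        w l = Algebra.trace (ZMod 2) K (δ * α ^ ((l : ℕ) + 1))
            + Algebra.trace (ZMod 2) F (c * θ ^ ((l : ℕ) + 1))}) :
    {w ∈ Kdual | hammingNorm w = 0}.ncard = 1 ∧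
    {w ∈ Kdual | hammingNorm w = (q ^ 2 - q) / 2}.ncard = q * (q ^ 2 - 1) / 2 ∧
    {w ∈ Kdual | hammingNorm w = q ^ 2 / 2}.ncard = q ^ 2 - 1 ∧
    {w ∈ Kdual | hammingNorm w = (q ^ 2 + q) / 2}.ncard = (q ^ 3 - 2 * q ^ 2 + q) / 2 ∧
    Kdual.ncard = 1 + q * (q ^ 2 - 1) / 2 + (q ^ 2 - 1) + (q ^ 3 - 2 * q ^ 2 + q) / 2 := by
  simpa using stmt_8_general (k := ZMod 2) 2 q (ZMod.card 2) hcF hcK α hα θ hθ Kdual hK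
end

section
/- Let m ≥ 1 and q = 2^m. Every zero-fixing automorphism of the MDS code M_q^⊥ ⊆ F_q^{q+1} is semilinear: if π is a permutation of {1,…,q+1} and σ_1,…,σ_{q+1} are permutations of F_q fixing 0 such that the map (v_1,…,v_{q+1}) ↦ (σ_1(v_{π^{-1}(1)}),…,σ_{q+1}(v_{π^{-1}(q+1)})) maps M_q^⊥ onto M_q^⊥, then there exist a field automorphism τ of F_q and nonzero constants c_1,…,c_{q+1} ∈ F_q with σ_j(a) = c_j·τ(a) for all j and all a ∈ F_q. Equivalently, Aut0(M_q^⊥) = AutL_2(M_q^⊥) = AutS(M_q^⊥). -/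
open Finset

/-- Zero-fixing automorphisms of a code. -/
def aut0Set {F : Type*} [Zero F] {ι : Type*} (C : Set (ι → F)) :
    Set (Equiv.Perm (ι → F)) :=
  {e | (∃ (π : Equiv.Perm ι) (σ : ι → Equiv.Perm F), (∀ i, σ i 0 = 0) ∧
        ∀ v i, e v i = σ i (v (π⁻¹ i))) ∧ ⇑e '' C = C}

/-- `F₂`-linear automorphisms of a code over a field of characteristic 2: the alphabet
permutations in every coordinate are additive (equivalently, `F₂`-linear). -/
def autL2Set {F : Type*} [Field F] {ι : Type*} (C : Set (ι → F)) :
    Set (Equiv.Perm (ι → F)) :=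
  {e | (∃ (π : Equiv.Perm ι) (σ : ι → Equiv.Perm F),
        (∀ i x y, σ i (x + y) = σ i x + σ i y) ∧
        ∀ v i, e v i = σ i (v (π⁻¹ i))) ∧ ⇑e '' C = C}

/-- Semilinear automorphisms of a code over a field `F`. -/
def autSSet {F : Type*} [Field F] {ι : Type*} (C : Set (ι → F)) :
    Set (Equiv.Perm (ι → F)) :=
  {e | (∃ (π : Equiv.Perm ι) (τ : F ≃+* F) (c : ι → F), (∀ i, c i ≠ 0) ∧
        ∀ v i, e v i = c i * τ (v (π⁻¹ i))) ∧ ⇑e '' C = C}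

/-!
Let `V` be an MDS code of dimension `k ≥ 2` and length `n > k`, mapped into itself by coordinatewise
bijections `ρ i` of the alphabet that fix `0`. Two codewords agreeing on `k` coordinates are equal.
Words `u` and `v` such that one of them vanishes at each of `k` given coordinates therefore satisfy
`ρ (u + v) = ρ u + ρ v`, which makes every `ρ i` additive. If `w` vanishes on `k - 1` coordinates,
then `ρ (t w)` and `ρ w` are proportional; hence `ρ j a` is proportional to `ρ i (a * r)` for the
ratio `r = w i / w j`. Moving one of the zeros of `w` gives `n - k` different ratios, and any two of
them differ by a factor in the group of `x` such that `ρ i (a * x)` is proportional to `ρ i a`. If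
`2 (n - k) > q - 1` this group is all of `F_q^×`, so that `ρ i` is multiplicative up to a scalar.
The dual code `M_q^⊥` has `k = 3` and `n = q + 1`, so this applies for `q ≥ 4`. When `q ≤ 3`, every
bijection of `F_q` that fixes `0` is multiplication by a constant.
-/

open Module

/-- A linear code of dimension `k` is maximum distance separable when a nonzero word vanishes on
fewer than `k` coordinates; for length `n` this says that the minimum distance is at least
`n - k + 1`. -/
def IsMDS {F ι : Type*} [Field F] (V : Submodule F (ι → F)) : Prop :=
  ∀ v ∈ V, ∀ s : Finset ι, finrank F V ≤ #s → (∀ i ∈ s, v i = 0) → v = 0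

/-- The maps `ρ i` of the alphabet, applied coordinatewise, carry the code `V` into the code `W`
and preserve the support of every word. -/
structure IsSupportPreserving {F ι : Type*} [Field F] (ρ : ι → F → F)
    (V W : Submodule F (ι → F)) : Prop where
  apply_eq_zero_iff : ∀ i a, ρ i a = 0 ↔ a = 0
  map_mem : ∀ v ∈ V, (fun i => ρ i (v i)) ∈ W

/-- The units `t` such that `s ↦ f (s * t)` is a nonzero multiple of `g`. -/
def scalings {F : Type*} [Field F] (f g : F → F) : Set Fˣ :=
  {t | ∃ c : Fˣ, ∀ s, f (s * t) = c * g s}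

/-- The units `t` such that replacing `s` by `s * t` multiplies `f s` by a constant. They are all of
`Fˣ` when `f` is semilinear. -/
def multipliers {F : Type*} [Field F] (f : F → F) : Subgroup Fˣ where
  carrier := scalings f f
  one_mem' := ⟨1, by simp⟩
  mul_mem' := by
    rintro t u ⟨c, hc⟩ ⟨d, hd⟩
    refine ⟨d * c, fun s => ?_⟩
    rw [Units.val_mul, ← mul_assoc, hd, hc, Units.val_mul, mul_assoc]
  inv_mem' := by
    rintro t ⟨c, hc⟩
    refine ⟨c⁻¹, fun s => ?_⟩
    rw [← Units.inv_mul_cancel_right s t, hc, Units.inv_mul_cancel_left,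
      Units.mul_inv_cancel_right]

section Multipliers

variable {F : Type*} [Field F] {f g : F → F}

theorem div_mem_multipliers {t u : Fˣ} (ht : t ∈ scalings f g) (hu : u ∈ scalings f g) :
    t / u ∈ multipliers f := by
  obtain ⟨c, hc⟩ := ht
  obtain ⟨d, hd⟩ := hu
  refine ⟨c / d, fun s => ?_⟩
  have hfs := hd (s * ↑u⁻¹)
  rw [Units.inv_mul_cancel_right] at hfs
  rw [div_eq_mul_inv, mul_comm t, Units.val_mul, ← mul_assoc, hc, hfs, Units.val_div_eq_div_val,
    div_mul_eq_mul_div, mul_div_assoc, mul_div_cancel_left₀ _ d.ne_zero]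

theorem apply_eq_apply_one_mul_of_mem_scalings {τ : F →+* F} (hf : ∀ a, f a = f 1 * τ a) {t : Fˣ}
    (ht : t ∈ scalings f g) (a : F) : g a = g 1 * τ a := by
  obtain ⟨c, hc⟩ := ht
  have hg (s : F) : c * g s = f 1 * (τ s * τ t) := by rw [← hc, hf, map_mul]
  have hg1 : c * g 1 = f 1 * τ t := by rw [hg, map_one, one_mul]
  refine mul_left_cancel₀ c.ne_zero ?_
  linear_combination hg a - τ a * hg1

theorem multipliers_eq_top_of_card_lt [Finite F]
    (h : Nat.card Fˣ < 2 * Nat.card (scalings f g)) : multipliers f = ⊤ := by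
  have hpos : 0 < Nat.card (scalings f g) := by omega
  obtain ⟨u, hu⟩ := (Nat.card_pos_iff.1 hpos).1
  have hle : Nat.card (scalings f g) ≤ Nat.card (multipliers f) :=
    Nat.card_le_card_of_injective (fun t => ⟨t / u, div_mem_multipliers t.2 hu⟩)
      fun t t' htt' => Subtype.ext (div_left_injective (congrArg Subtype.val htt'))
  have hindex : (multipliers f).index < 2 := by
    by_contra! htwo
    have := Nat.mul_le_mul_left (Nat.card (multipliers f)) htwo
    rw [Subgroup.card_mul_index] at this
    omega
  have : (multipliers f).index ≠ 0 := Subgroup.index_ne_zero_of_finite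
  exact Subgroup.index_eq_one.1 (by omega)

theorem exists_ringEquiv_of_multipliers_eq_top [Finite F] (h1 : f 1 ≠ 0)
    (hadd : ∀ x y, f (x + y) = f x + f y) (hmul : multipliers f = ⊤) :
    ∃ τ : F ≃+* F, ∀ a, f a = f 1 * τ a := by
  have h0 : f 0 = 0 := by simpa using hadd 0 0
  have hmap_mul (x y : F) : f (x * y) * f 1 = f x * f y := by
    rcases eq_or_ne y 0 with rfl | hy
    · simp [h0]
    obtain ⟨c, hc⟩ : Units.mk0 y hy ∈ multipliers f := hmul ▸ Subgroup.mem_top _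
    have hc1 : f y = c * f 1 := by simpa using hc 1
    rw [hc1, show f (x * y) = c * f x from hc x]
    ring
  let φ : F →+* F :=
    { toFun := fun a => f a / f 1
      map_one' := div_self h1
      map_zero' := by simp [h0]
      map_add' := fun x y => by rw [hadd, add_div]
      map_mul' := fun x y => by
        field_simp
        exact hmap_mul x y }
  exact ⟨RingEquiv.ofBijective φ (Finite.injective_iff_bijective.1 φ.injective),
    fun a => (mul_div_cancel₀ (f a) h1).symm⟩

theorem apply_eq_apply_one_mul_of_card_le_three [Fintype F] (hF : Fintype.card F ≤ 3)
    (hf : Function.Injective f) (h0 : f 0 = 0) (a : F) : f a = f 1 * a := by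
  classical
  rcases eq_or_ne a 0 with rfl | ha0
  · simp [h0]
  rcases eq_or_ne a 1 with rfl | ha1
  · simp
  have h1 : f 1 ≠ 0 := fun h => one_ne_zero (hf (h.trans h0.symm))
  have hfa0 : f a ≠ 0 := fun h => ha0 (hf (h.trans h0.symm))
  by_contra hne
  have hcard : #{0, f 1, f a, f 1 * a} = 4 := by
    have := hf.ne ha1
    grind
  have := card_le_univ {0, f 1, f a, f 1 * a}
  omega

end Multipliers

section MDSCodes

variable {F ι : Type*} [Field F] {V W : Submodule F (ι → F)} {ρ : ι → F → F}

namespace IsMDS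

theorem eq_of_eqOn (hV : IsMDS V) {v w : ι → F} (hv : v ∈ V) (hw : w ∈ V) {s : Finset ι}
    (hs : finrank F V ≤ #s) (h : ∀ i ∈ s, v i = w i) : v = w :=
  sub_eq_zero.1 (hV _ (V.sub_mem hv hw) s hs fun i hi => sub_eq_zero.2 (h i hi))

theorem apply_ne_zero (hV : IsMDS V) {v : ι → F} (hv : v ∈ V) (hv0 : v ≠ 0) {s : Finset ι}
    (hs : finrank F V ≤ #s + 1) (h : ∀ i ∈ s, v i = 0) {i : ι} (hi : i ∉ s) : v i ≠ 0 := by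
  intro hvi
  exact hv0 (hV v hv (s.cons i hi) (by rwa [card_cons]) (by simpa [hvi] using h))

theorem eq_of_apply_eq_zero (hV : IsMDS V) {v : ι → F} (hv : v ∈ V) (hv0 : v ≠ 0) {s : Finset ι}
    (hs : finrank F V ≤ #s + 2) (h : ∀ i ∈ s, v i = 0) {p p' : ι} (hp : p ∉ s) (hp' : p' ∉ s)
    (hvp : v p = 0) (hvp' : v p' = 0) : p = p' := by
  by_contra hne
  exact hV.apply_ne_zero hv hv0 (s := s.cons p hp) (by rwa [card_cons]) (by simpa [hvp] using h)
    (i := p') (by simp [hp', Ne.symm hne]) hvp'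

theorem exists_mem_eqOn (hV : IsMDS V) {s : Finset ι} (hs : #s = finrank F V) (f : ι → F) :
    ∃ v ∈ V, ∀ i ∈ s, v i = f i := by
  let r : V →ₗ[F] (s → F) := LinearMap.funLeft F F Subtype.val ∘ₗ V.subtype
  have hr : Function.Injective r := fun v w h =>
    Subtype.ext (hV.eq_of_eqOn v.2 w.2 hs.ge fun i hi => congrFun h ⟨i, hi⟩)
  have := FiniteDimensional.of_injective r hr
  have hr' : Function.Surjective r :=
    (LinearMap.injective_iff_surjective_of_finrank_eq_finrank (by simp [hs])).1 hr
  obtain ⟨v, hv⟩ := hr' fun i => f i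
  exact ⟨v, v.2, fun i hi => congrFun hv ⟨i, hi⟩⟩

theorem exists_mem_apply_eq (hV : IsMDS V) {s : Finset ι} (hs : #s + 1 = finrank F V) {i : ι}
    (hi : i ∉ s) (a : F) : ∃ v ∈ V, v i = a ∧ ∀ p ∈ s, v p = 0 := by
  classical
  obtain ⟨v, hv, h⟩ := hV.exists_mem_eqOn (s := s.cons i hi) (by rwa [card_cons]) (Pi.single i a)
  refine ⟨v, hv, by simpa using h i (mem_cons_self i s), fun p hp => ?_⟩
  rw [h p (mem_cons_of_mem hp), Pi.single_eq_of_ne (ne_of_mem_of_not_mem hp hi)]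

theorem map_funCongrLeft (hV : IsMDS V) (π : Equiv.Perm ι) :
    IsMDS (V.map (LinearEquiv.funCongrLeft F F π).toLinearMap) := by
  rintro _ ⟨v, hv, rfl⟩ s hs h
  rw [LinearEquiv.finrank_map_eq, ← card_map π.toEmbedding] at hs
  have hv0 : v = 0 := hV v hv _ hs (by simpa only [forall_mem_map] using! h)
  simp [hv0]

end IsMDS

namespace IsSupportPreserving

theorem apply_zero (hρ : IsSupportPreserving ρ V W) (i : ι) : ρ i 0 = 0 :=
  (hρ.apply_eq_zero_iff i 0).2 rfl

theorem apply_mul_mul_apply (hρ : IsSupportPreserving ρ V W) (hW : IsMDS W) {w : ι → F}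
    (hw : w ∈ V) {s : Finset ι} (hs : finrank F W ≤ #s + 1) (hws : ∀ i ∈ s, w i = 0) {i : ι}
    (hi : i ∉ s) (j : ι) (t : F) :
    ρ i (w i) * ρ j (t * w j) = ρ i (t * w i) * ρ j (w j) := by
  refine congrFun (hW.eq_of_eqOn (s := s.cons i hi)
    (W.smul_mem (ρ i (w i)) (hρ.map_mem _ (V.smul_mem t hw)))
    (W.smul_mem (ρ i (t * w i)) (hρ.map_mem w hw)) (by rwa [card_cons]) ?_) j
  intro a ha
  rcases mem_cons.1 ha with rfl | ha
  · simp [mul_comm]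
  · simp [hws a ha, hρ.apply_zero]

theorem map_add (hρ : IsSupportPreserving ρ V W) (hV : IsMDS V) (hW : IsMDS W)
    (hVW : finrank F W ≤ finrank F V) {t : Finset ι} (ht : #t = finrank F V)
    (hk : 2 ≤ finrank F V) {i : ι} (hi : i ∉ t) (x y : F) : ρ i (x + y) = ρ i x + ρ i y := by
  classical
  obtain ⟨j, hj, l, hl, hjl⟩ := one_lt_card.1 (ht.symm ▸ hk : 1 < #t)
  have hword (a : F) {b : ι} (hb : b ∈ t) : ∃ v ∈ V, v i = a ∧ ∀ p ∈ t.erase b, v p = 0 :=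
    hV.exists_mem_apply_eq (by rw [card_erase_add_one hb, ht]) (mt mem_of_mem_erase hi) a
  obtain ⟨u, hu, hui, hut⟩ := hword x hj
  obtain ⟨v, hv, hvi, hvt⟩ := hword y hl
  have h : (fun p => ρ p (u p + v p)) = fun p => ρ p (u p) + ρ p (v p) := by
    refine hW.eq_of_eqOn (hρ.map_mem _ (V.add_mem hu hv))
      (W.add_mem (hρ.map_mem u hu) (hρ.map_mem v hv)) (ht ▸ hVW) fun p hp => ?_
    rcases eq_or_ne p j with rfl | hpj
    · simp [hvt p (mem_erase.2 ⟨hjl, hp⟩), hρ.apply_zero]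
    · simp [hut p (mem_erase.2 ⟨hpj, hp⟩), hρ.apply_zero]
  simpa [hui, hvi] using congrFun h i

theorem mem_scalings (hρ : IsSupportPreserving ρ V W) (hW : IsMDS W) {w : ι → F}
    (hw : w ∈ V) {s : Finset ι} (hs : finrank F W ≤ #s + 1) (hws : ∀ i ∈ s, w i = 0) {i j : ι}
    (hi : i ∉ s) (hj : w j = 1) {t : Fˣ} (ht : w i = t) : t ∈ scalings (ρ i) (ρ j) := by
  have hne (i : ι) {a : F} (ha : a ≠ 0) : ρ i a ≠ 0 := mt (hρ.apply_eq_zero_iff i a).1 ha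
  refine ⟨Units.mk0 _ (hne i t.ne_zero) / Units.mk0 _ (hne j one_ne_zero), fun a => ?_⟩
  have h := hρ.apply_mul_mul_apply hW hw hs hws hi j a
  rw [hj, ht, mul_one] at h
  rw [Units.val_div_eq_div_val, Units.val_mk0, Units.val_mk0, div_mul_eq_mul_div,
    eq_div_iff (hne j one_ne_zero), ← h, mul_comm]

-- For `p ∉ s ∪ {i, j}`, the word that vanishes on `s ∪ {p}` and is `1` at `j` contributes its
-- `i`-th entry to `scalings (ρ i) (ρ j)`, and different `p` contribute different entries.
theorem card_le_finrank_add_card_scalings [Finite F] [Fintype ι]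
    (hρ : IsSupportPreserving ρ V W) (hV : IsMDS V) (hW : IsMDS W)
    (hVW : finrank F W ≤ finrank F V) {s : Finset ι} (hs : #s + 2 = finrank F V) {i j : ι}
    (hi : i ∉ s) (hj : j ∉ s) (hij : i ≠ j) :
    Fintype.card ι ≤ finrank F V + Nat.card (scalings (ρ i) (ρ j)) := by
  classical
  let t := insert i (insert j s)
  have ht : #t = finrank F V := by simp [t, hi, hj, hij, ← hs]
  have hnotMem (p : {p // p ∉ t}) : (p : ι) ≠ i ∧ (p : ι) ≠ j ∧ (p : ι) ∉ s := by
    simpa [t] using p.2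
  have hcard (p : {p // p ∉ t}) : #(insert (p : ι) s) + 1 = finrank F V := by
    rw [card_insert_of_notMem (hnotMem p).2.2, ← hs]
  have hword (p : {p // p ∉ t}) : ∃ v ∈ V, v j = 1 ∧ ∀ a ∈ insert (p : ι) s, v a = 0 :=
    hV.exists_mem_apply_eq (hcard p) (by simp [hj, (hnotMem p).2.1.symm]) 1
  choose w hwV hwj hws using hword
  have hw0 (p) : w p ≠ 0 := fun h => one_ne_zero ((hwj p).symm.trans (congrFun h j))
  have hip (p : {p // p ∉ t}) : i ∉ insert (p : ι) s := by simp [hi, (hnotMem p).1.symm]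
  let r (p : {p // p ∉ t}) : Fˣ :=
    Units.mk0 (w p i) (hV.apply_ne_zero (hwV p) (hw0 p) (hcard p).ge (hws p) (hip p))
  have hr (p) : r p ∈ scalings (ρ i) (ρ j) :=
    hρ.mem_scalings hW (hwV p) (hVW.trans (hcard p).ge) (hws p) (hip p) (hwj p) rfl
  have hinj : Function.Injective r := by
    intro p p' h
    have hwi : w p i = w p' i := congrArg Units.val h
    have hwp : w p = w p' := hV.eq_of_eqOn (hwV p) (hwV p') ht.ge (by
      simp +contextual [t, hwi, hwj, hws])
    exact Subtype.ext (hV.eq_of_apply_eq_zero (hwV p) (hw0 p) hs.ge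
      (fun a ha => hws p a (mem_insert_of_mem ha)) (hnotMem p).2.2 (hnotMem p').2.2
      (hws p p (mem_insert_self _ _)) (by rw [hwp, hws p' p' (mem_insert_self _ _)]))
  have hle : Nat.card {p // p ∉ t} ≤ Nat.card (scalings (ρ i) (ρ j)) :=
    Nat.card_le_card_of_injective (fun p => ⟨r p, hr p⟩)
      fun p p' h => hinj (congrArg Subtype.val h)
  have hcompl : Nat.card {p // p ∉ t} = Fintype.card ι - finrank F V := by
    rw [Nat.card_eq_fintype_card, Fintype.card_subtype_compl, Fintype.card_coe, ht]
  omega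

theorem exists_ringEquiv [Fintype F] [Fintype ι] (hρ : IsSupportPreserving ρ V W) (hV : IsMDS V)
    (hW : IsMDS W) (hVW : finrank F W ≤ finrank F V) (hk : 2 ≤ finrank F V)
    (hn : Fintype.card F + 2 * finrank F V ≤ 2 * Fintype.card ι) :
    ∃ (τ : F ≃+* F) (c : ι → F), (∀ j, c j ≠ 0) ∧ ∀ j a, ρ j a = c j * τ a := by
  classical
  have hF : 0 < Fintype.card F := Fintype.card_pos
  have h1 (i : ι) : ρ i 1 ≠ 0 := mt (hρ.apply_eq_zero_iff i 1).1 one_ne_zero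
  have hcard {i j : ι} (hij : i ≠ j) :
      Fintype.card ι ≤ finrank F V + Nat.card (scalings (ρ i) (ρ j)) := by
    obtain ⟨s, hs, hsk⟩ : ∃ s ⊆ ({i, j} : Finset ι)ᶜ, #s = finrank F V - 2 :=
      exists_subset_card_eq (by rw [card_compl, card_pair hij]; omega)
    exact hρ.card_le_finrank_add_card_scalings hV hW hVW (s := s) (by omega)
      (fun hi => by simpa using hs hi) (fun hj => by simpa using hs hj) hij
  have hι : 1 < Fintype.card ι := by omega
  obtain ⟨i, j, hij⟩ := Fintype.exists_pair_of_one_lt_card hι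
  have hmul : multipliers (ρ i) = ⊤ := by
    refine multipliers_eq_top_of_card_lt (g := ρ j) ?_
    have := hcard hij
    rw [Nat.card_units, Nat.card_eq_fintype_card]
    omega
  have hadd : ∀ x y, ρ i (x + y) = ρ i x + ρ i y := by
    obtain ⟨t, ht, htk⟩ : ∃ t ⊆ ({i} : Finset ι)ᶜ, #t = finrank F V :=
      exists_subset_card_eq (by rw [card_compl, card_singleton]; omega)
    exact hρ.map_add hV hW hVW htk hk fun hi => by simpa using ht hi
  obtain ⟨τ, hτ⟩ := exists_ringEquiv_of_multipliers_eq_top (h1 i) hadd hmul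
  refine ⟨τ, fun l => ρ l 1, h1, fun l a => ?_⟩
  rcases eq_or_ne i l with rfl | hil
  · exact hτ a
  have hpos : 0 < Nat.card (scalings (ρ i) (ρ l)) := by have := hcard hil; omega
  obtain ⟨t, ht⟩ := (Nat.card_pos_iff.1 hpos).1
  exact apply_eq_apply_one_mul_of_mem_scalings (τ := τ.toRingHom) hτ ht a

end IsSupportPreserving

end MDSCodes

theorem IsMDS.exists_ringEquiv_of_coordPerm {F ι : Type*} [Field F] [Fintype F] [Fintype ι]
    {V : Submodule F (ι → F)} (hV : IsMDS V) (hk : 2 ≤ finrank F V)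
    (hn : Fintype.card F + 2 * finrank F V ≤ 2 * Fintype.card ι) {π : Equiv.Perm ι}
    {σ : ι → F → F} (hσ : ∀ i a, σ i a = 0 ↔ a = 0)
    (hmap : ∀ v ∈ V, (fun i => σ i (v (π⁻¹ i))) ∈ V) :
    ∃ (τ : F ≃+* F) (c : ι → F), (∀ i, c i ≠ 0) ∧ ∀ i a, σ i a = c i * τ a := by
  let W := V.map (LinearEquiv.funCongrLeft F F π).toLinearMap
  have hρ : IsSupportPreserving (fun i => σ (π i)) V W :=
    ⟨fun i => hσ (π i), fun v hv => ⟨_, hmap v hv, by ext i; simp [LinearMap.funLeft_apply]⟩⟩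
  obtain ⟨τ, c, hc, hτ⟩ := hρ.exists_ringEquiv hV (hV.map_funCongrLeft π)
    (LinearEquiv.finrank_map_eq _ V).le hk hn
  exact ⟨τ, fun i => c (π⁻¹ i), fun i => hc _, fun i a => by simpa using hτ (π⁻¹ i) a⟩

section TraceCode

variable (F : Type*) {K ι : Type*} [Field F] [Field K] [Algebra F K]

/-- The encoder sending the message `(c, δ)` to the word `(c + Tr(δ * x i))_i`. -/
noncomputable def traceEncoder (x : ι → K) : F × K →ₗ[F] (ι → F) :=
  LinearMap.pi fun i =>
    (LinearMap.id (M := F)).coprod (Algebra.trace F K ∘ₗ LinearMap.mulRight F (x i))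

/-- The code of all words `(c + Tr(δ * x i))_i`; the code `M_q^⊥` has the points
`x j = ζ ^ (j + 1)`. -/
noncomputable def traceCode (x : ι → K) : Submodule F (ι → F) :=
  LinearMap.range (traceEncoder F x)

variable {F}

theorem traceEncoder_apply (x : ι → K) (c : F) (δ : K) (i : ι) :
    traceEncoder F x (c, δ) i = c + Algebra.trace F K (δ * x i) := by
  simp [traceEncoder]

theorem mem_traceCode {x : ι → K} {w : ι → F} :
    w ∈ traceCode F x ↔ ∃ (c : F) (δ : K), ∀ i, w i = c + Algebra.trace F K (δ * x i) := by
  simp only [traceCode, LinearMap.mem_range, Prod.exists, funext_iff, traceEncoder_apply, eq_comm]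

variable [Fintype F]

theorem algebraMap_trace_of_finrank_eq_two (hK : finrank F K = 2) (a : K) :
    algebraMap F K (Algebra.trace F K a) = a + a ^ Fintype.card F := by
  have : Module.Finite F K := finite_of_finrank_eq_succ hK
  have : Finite K := Module.finite_of_finite F
  simp [FiniteField.algebraMap_trace_eq_sum_pow, hK, sum_range_succ]

open Polynomial in
theorem eq_zero_of_traceEncoder_eq_zero (hK : finrank F K = 2) {x : ι → K}
    (hx : Function.Injective x) (hnorm : ∀ i, x i ^ (Fintype.card F + 1) = 1) {s : Finset ι}
    (hs : 3 ≤ #s) {m : F × K} (hm : ∀ i ∈ s, traceEncoder F x m i = 0) : m = 0 := by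
  classical
  obtain ⟨c, δ⟩ := m
  let p : K[X] := C δ * X ^ 2 + C (algebraMap F K c) * X + C (δ ^ Fintype.card F)
  have hroot : ∀ y ∈ s.image x, p.eval y = 0 := by
    intro y hy
    obtain ⟨i, hi, rfl⟩ := mem_image.1 hy
    have h := congrArg (algebraMap F K) (hm i hi)
    rw [traceEncoder_apply, map_add, algebraMap_trace_of_finrank_eq_two hK, map_zero,
      mul_pow] at h
    simp only [p, eval_add, eval_mul, eval_C, eval_pow, eval_X]
    linear_combination x i * h - δ ^ Fintype.card F * hnorm i
  have hp : p = 0 := eq_zero_of_natDegree_lt_card_of_eval_eq_zero' p _ hroot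
    (by rw [card_image_of_injective s hx]; exact natDegree_quadratic_le.trans_lt hs)
  have hδ : δ = 0 := by simpa [p, coeff_X, coeff_C, -map_pow] using congrArg (coeff · 2) hp
  have hc : algebraMap F K c = 0 := by
    simpa [p, coeff_X, coeff_C, -map_pow, -map_eq_zero] using congrArg (coeff · 1) hp
  exact Prod.ext ((map_eq_zero _).1 hc) hδ

theorem finrank_traceCode [Fintype ι] (hK : finrank F K = 2) {x : ι → K}
    (hx : Function.Injective x) (hnorm : ∀ i, x i ^ (Fintype.card F + 1) = 1)
    (hι : 3 ≤ Fintype.card ι) : finrank F (traceCode F x) = 3 := by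
  have : Module.Finite F K := finite_of_finrank_eq_succ hK
  have hinj : Function.Injective (traceEncoder F x) :=
    (injective_iff_map_eq_zero _).2 fun m hm =>
      eq_zero_of_traceEncoder_eq_zero hK hx hnorm (s := univ) hι fun i _ => congrFun hm i
  rw [traceCode, LinearMap.finrank_range_of_inj hinj, finrank_prod, finrank_self, hK]

theorem isMDS_traceCode [Fintype ι] (hK : finrank F K = 2) {x : ι → K}
    (hx : Function.Injective x) (hnorm : ∀ i, x i ^ (Fintype.card F + 1) = 1)
    (hι : 3 ≤ Fintype.card ι) : IsMDS (traceCode F x) := by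
  rintro _ ⟨m, rfl⟩ s hs hm
  rw [finrank_traceCode hK hx hnorm hι] at hs
  rw [eq_zero_of_traceEncoder_eq_zero hK hx hnorm hs hm, map_zero]

end TraceCode

section AutomorphismSets

variable {F ι : Type*} [Field F] (C : Set (ι → F))

theorem autSSet_subset_autL2Set : autSSet C ⊆ autL2Set C := by
  rintro e ⟨⟨π, τ, c, hc, he⟩, hC⟩
  exact ⟨⟨π, fun i => τ.toEquiv.trans (Equiv.mulLeft₀ (c i) (hc i)),
    fun i x y => by simp [mul_add], fun v i => by simp [he]⟩, hC⟩

theorem autL2Set_subset_aut0Set : autL2Set C ⊆ aut0Set C := by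
  rintro e ⟨⟨π, σ, hσ, he⟩, hC⟩
  exact ⟨⟨π, σ, fun i => by simpa using hσ i 0 0, he⟩, hC⟩

variable {C}

theorem aut0Set_subset_autSSet
    (hC : ∀ (π : Equiv.Perm ι) (σ : ι → Equiv.Perm F), (∀ i, σ i 0 = 0) →
      (fun v : ι → F => fun i => σ i (v (π⁻¹ i))) '' C = C →
      ∃ (τ : F ≃+* F) (c : ι → F), (∀ i, c i ≠ 0) ∧ ∀ (i : ι) (a : F), σ i a = c i * τ a) :
    aut0Set C ⊆ autSSet C := by
  rintro e ⟨⟨π, σ, hσ, he⟩, heC⟩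
  have hfun : (fun v : ι → F => fun i => σ i (v (π⁻¹ i))) = ⇑e :=
    funext fun v => funext fun i => (he v i).symm
  obtain ⟨τ, c, hc, hτ⟩ := hC π σ hσ (by rw [hfun, heC])
  exact ⟨⟨π, τ, c, hc, fun v i => by rw [he, hτ]⟩, heC⟩

end AutomorphismSets

theorem exists_ringEquiv_of_coordPerm_traceCode {F K ι : Type*} [Field F] [Field K] [Fintype F]
    [Algebra F K] [Fintype ι] (hK : finrank F K = 2) {x : ι → K} (hx : Function.Injective x)
    (hnorm : ∀ i, x i ^ (Fintype.card F + 1) = 1) (hι : Fintype.card ι = Fintype.card F + 1)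
    {π : Equiv.Perm ι} {σ : ι → F → F} (hσ : ∀ i, Function.Injective (σ i))
    (hσ0 : ∀ i, σ i 0 = 0)
    (hmap : ∀ v ∈ traceCode F x, (fun i => σ i (v (π⁻¹ i))) ∈ traceCode F x) :
    ∃ (τ : F ≃+* F) (c : ι → F), (∀ i, c i ≠ 0) ∧ ∀ i a, σ i a = c i * τ a := by
  have hσ_iff (i : ι) (a : F) : σ i a = 0 ↔ a = 0 := (hσ i).eq_iff' (hσ0 i)
  rcases le_or_gt (Fintype.card F) 3 with hF | hF
  · exact ⟨RingEquiv.refl F, fun i => σ i 1, fun i => mt (hσ_iff i 1).1 one_ne_zero,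
      fun i => apply_eq_apply_one_mul_of_card_le_three hF (hσ i) (hσ0 i)⟩
  · have hdim := finrank_traceCode hK hx hnorm (by omega)
    exact (isMDS_traceCode hK hx hnorm (by omega)).exists_ringEquiv_of_coordPerm
      (by omega) (by omega) hσ_iff hmap

theorem finrank_eq_of_card_eq_pow {F V : Type*} [Field F] [AddCommGroup V] [Module F V]
    [Fintype F] [Fintype V] {n : ℕ} (h : Fintype.card V = Fintype.card F ^ n) : finrank F V = n :=
  Nat.pow_right_injective (Fintype.one_lt_card (α := F))
    ((card_eq_pow_finrank (K := F) (V := V)).symm.trans h)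

theorem injective_pow_succ_of_isPrimitiveRoot {M : Type*} [CommMonoid M] {n : ℕ} {ζ : M}
    (hζ : IsPrimitiveRoot ζ n) : Function.Injective fun j : Fin n => ζ ^ ((j : ℕ) + 1) := by
  intro i j h
  have hunit : IsUnit ζ := hζ.isUnit i.pos.ne'
  simp only [pow_succ, hunit.mul_left_inj] at h
  exact Fin.ext (hζ.pow_inj i.2 j.2 h)

theorem orderOf_pow_sub_one {G : Type*} [Monoid G] {α : G} {q : ℕ} (hq : 1 < q)
    (hα : orderOf α = q ^ 2 - 1) : orderOf (α ^ (q - 1)) = q + 1 := by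
  have hfac : q ^ 2 - 1 = (q + 1) * (q - 1) := by simpa using Nat.sq_sub_sq q 1
  have hpos : 0 < q - 1 := by omega
  rw [orderOf_pow_of_dvd hpos.ne' (hα ▸ hfac ▸ dvd_mul_left _ _), hα, hfac,
    Nat.mul_div_cancel _ hpos]

theorem stmt_10_general (q : ℕ) (F K : Type*) [Field F] [Field K] [Fintype F] [Fintype K]
    [Algebra F K] (hcF : Fintype.card F = q) (hcK : Fintype.card K = q ^ 2)
    (ζ : K) (hζ : orderOf ζ = q + 1) (Mdual : Set (Fin (q + 1) → F))
    (hM : Mdual = {w | ∃ (c : F) (δ : K), ∀ j : Fin (q + 1),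
        w j = c + Algebra.trace F K (δ * ζ ^ ((j : ℕ) + 1))}) :
    (∀ (π : Equiv.Perm (Fin (q + 1))) (σ : Fin (q + 1) → Equiv.Perm F),
      (∀ j, σ j 0 = 0) →
      (fun v : Fin (q + 1) → F => fun j => σ j (v (π⁻¹ j))) '' Mdual = Mdual →
      ∃ (τ : F ≃+* F) (c : Fin (q + 1) → F), (∀ j, c j ≠ 0) ∧
        ∀ (j : Fin (q + 1)) (a : F), σ j a = c j * τ a) ∧
    aut0Set Mdual = autL2Set Mdual ∧ autL2Set Mdual = autSSet Mdual := by
  subst hcF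
  let x (j : Fin (Fintype.card F + 1)) : K := ζ ^ ((j : ℕ) + 1)
  have hx : Function.Injective x :=
    injective_pow_succ_of_isPrimitiveRoot (hζ ▸ IsPrimitiveRoot.orderOf ζ)
  have hnorm (j) : x j ^ (Fintype.card F + 1) = 1 := by
    rw [← hζ, ← pow_mul, mul_comm, pow_mul, pow_orderOf_eq_one, one_pow]
  have hMx : Mdual = traceCode F x := hM.trans (Set.ext fun w => mem_traceCode.symm)
  have hsemilinear := fun π (σ : Fin (Fintype.card F + 1) → Equiv.Perm F)
      (hσ0 : ∀ j, σ j 0 = 0) (himg : (fun v j => σ j (v (π⁻¹ j))) '' Mdual = Mdual) =>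
    exists_ringEquiv_of_coordPerm_traceCode (finrank_eq_of_card_eq_pow hcK) hx hnorm
      (Fintype.card_fin _) (π := π) (fun j => (σ j).injective) hσ0 fun v hv =>
        hMx.subset (himg.subset ⟨v, hMx.superset hv, rfl⟩)
  have h0S := aut0Set_subset_autSSet hsemilinear
  exact ⟨hsemilinear,
    (h0S.trans (autSSet_subset_autL2Set _)).antisymm (autL2Set_subset_aut0Set _),
    ((autL2Set_subset_aut0Set _).trans h0S).antisymm (autSSet_subset_autL2Set _)⟩

/-- Let `m ≥ 1`, `q = 2^m`.  Every zero-fixing automorphism of the MDS code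
`M_q^⊥ ⊆ F_q^{q+1}` is semilinear: if a coordinate permutation `π` together with
zero-fixing alphabet permutations `σ_j` maps `M_q^⊥` onto itself, then there are a field
automorphism `τ` of `F_q` and nonzero constants `c_j` with `σ_j(a) = c_j·τ(a)` for all `j`
and `a`.  Equivalently, `Aut0(M_q^⊥) = AutL_2(M_q^⊥) = AutS(M_q^⊥)`. -/
theorem stmt_10 (m q : ℕ) (hm : 1 ≤ m) (hq : q = 2 ^ m)
    (F K : Type) [Field F] [Field K] [Fintype F] [Fintype K] [Algebra F K]
    (hcF : Fintype.card F = q) (hcK : Fintype.card K = q ^ 2)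
    (α : K) (hα : orderOf α = q ^ 2 - 1)
    (ζ : K) (hζ : ζ = α ^ (q - 1))
    (Mdual : Set (Fin (q + 1) → F))
    (hM : Mdual = {w | ∃ (c : F) (δ : K), ∀ j : Fin (q + 1),
        w j = c + Algebra.trace F K (δ * ζ ^ ((j : ℕ) + 1))}) :
    (∀ (π : Equiv.Perm (Fin (q + 1))) (σ : Fin (q + 1) → Equiv.Perm F),
      (∀ j, σ j 0 = 0) →
      (fun v : Fin (q + 1) → F => fun j => σ j (v (π⁻¹ j))) '' Mdual = Mdual →
      ∃ (τ : F ≃+* F) (c : Fin (q + 1) → F), (∀ j, c j ≠ 0) ∧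
        ∀ (j : Fin (q + 1)) (a : F), σ j a = c j * τ a) ∧
    aut0Set Mdual = autL2Set Mdual ∧ autL2Set Mdual = autSSet Mdual := by
  exact stmt_10_general q F K hcF hcK ζ
    (hζ ▸ orderOf_pow_sub_one (hcF ▸ Fintype.one_lt_card) hα) Mdual hM
end
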